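/- arXiv:1910.00173 — 4 statements merged into one kernel-verified Lean document; each statement's English description precedes it below -/
import Mathlib

section
/- Let 0 < α < 1/10 and T > 0. Define Γ(β) = (cos β)^α, c = (2/π) ∫_0^{π/2} Γ(β) sin(2β) dβ, Ω*(z) = 3z/(1+z)², η*(z) = 6z/(1+z)³, and for t < T, R > 0, β ∈ [0,π/2] set Ω(R,β,t) = (α/c) (T−t)^{−1} Γ(β) Ω*(R/(T−t)) and η(R,β,t) = (α/c) (T−t)^{−2} Γ(β) η*(R/(T−t)). Then c > 0 and (Ω,η) is an exact self-similar blowup solution of the leading-order system: for every t < T, R > 0 and β ∈ [0,π/2], ∂_t Ω(R,β,t) = η(R,β,t) and ∂_t η(R,β,t) = (2/(πα)) L₁₂(Ω(·,·,t))(R) · η(R,β,t). -/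
open Real MeasureTheory Set

noncomputable section

namespace Paper

/-- The domain `(0,∞) × (0,π/2)` in the `(R,β)` variables. -/
def Qdom : Set (ℝ × ℝ) := Set.Ioi (0:ℝ) ×ˢ Set.Ioo (0:ℝ) (Real.pi/2)

/-- Inner product `⟨f,g⟩ = ∫₀^∞ ∫₀^{π/2} f g dβ dR`. -/
def inner2 (f g : ℝ → ℝ → ℝ) : ℝ :=
  ∫ R in Set.Ioi (0:ℝ), ∫ β in Set.Ioo (0:ℝ) (Real.pi/2), f R β * g R β

/-- The `L²` norm `‖f‖₂`. -/
def norm2 (f : ℝ → ℝ → ℝ) : ℝ := Real.sqrt (inner2 f f)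

/-- `‖h‖_{L²(R)}` for functions of `R` alone. -/
def normR (h : ℝ → ℝ) : ℝ := Real.sqrt (∫ R in Set.Ioi (0:ℝ), (h R)^2)

/-- `D_R = R ∂_R`. -/
def DR (f : ℝ → ℝ → ℝ) : ℝ → ℝ → ℝ := fun R β => R * deriv (fun r => f r β) R

/-- `D_R` for functions of `R` alone. -/
def DR1 (h : ℝ → ℝ) : ℝ → ℝ := fun R => R * deriv h R

/-- `D_β = sin(2β) ∂_β`. -/
def Dbeta (f : ℝ → ℝ → ℝ) : ℝ → ℝ → ℝ :=
  fun R β => Real.sin (2*β) * deriv (fun b => f R b) β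

/-- `L₁₂(Ω)(R) = ∫_R^∞ ∫₀^{π/2} Ω(s,β) sin(2β) s⁻¹ dβ ds`. -/
def L12 (Ω : ℝ → ℝ → ℝ) (R : ℝ) : ℝ :=
  ∫ s in Set.Ioi R, ∫ β in Set.Ioo (0:ℝ) (Real.pi/2), Ω s β * Real.sin (2*β) / s

/-- `L̃₁₂(Ω)(R) = L₁₂(Ω)(R) − L₁₂(Ω)(0)`. -/
def tL12 (Ω : ℝ → ℝ → ℝ) (R : ℝ) : ℝ := L12 Ω R - L12 Ω 0

/-- Compact support contained in the open domain `(0,∞)×(0,π/2)`. -/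
def suppIn (f : ℝ → ℝ → ℝ) : Prop :=
  ∃ K : Set (ℝ × ℝ), IsCompact K ∧ K ⊆ Qdom ∧ ∀ x y : ℝ, (x, y) ∉ K → f x y = 0

/-- Integrability over the domain. -/
def Integrable2 (f : ℝ → ℝ → ℝ) : Prop :=
  MeasureTheory.IntegrableOn (Function.uncurry f) Qdom

/-- `Γ(β) = (cos β)^α`. -/
def Γf (α : ℝ) (β : ℝ) : ℝ := Real.cos β ^ α

/-- The normalizing constant `c = (2/π)∫₀^{π/2} Γ(β) sin(2β) dβ`. -/
def cst (α : ℝ) : ℝ :=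
  (2/Real.pi) * ∫ β in Set.Ioo (0:ℝ) (Real.pi/2), Γf α β * Real.sin (2*β)

/-- The approximate profile `Ω̄`. -/
def Ωbar (α : ℝ) : ℝ → ℝ → ℝ := fun R β => (α / cst α) * Γf α β * (3*R/(1+R)^2)

/-- The approximate profile `η̄`. -/
def ηbar (α : ℝ) : ℝ → ℝ → ℝ := fun R β => (α / cst α) * Γf α β * (6*R/(1+R)^3)

/-- The singular weight `φ₁ = (1+R)⁴R⁻⁴ sin(2β)^{-σ}`, `σ = 99/100`. -/
def phi1 : ℝ → ℝ → ℝ := fun R β => (1+R)^4 / R^4 * Real.sin (2*β) ^ (-(99/100 : ℝ))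

/-- The singular weight `φ₂ = (1+R)⁴R⁻⁴ sin(2β)^{-γ}`, `γ = 1 + α/10`. -/
def phi2 (α : ℝ) : ℝ → ℝ → ℝ := fun R β => (1+R)^4 / R^4 * Real.sin (2*β) ^ (-(1 + α/10))

/-- The singular weight `ψ₁ = (1+R)⁴R⁻⁴ (sin β cos β)^{-σ}`. -/
def psi1 : ℝ → ℝ → ℝ := fun R β =>
  (1+R)^4 / R^4 * (Real.sin β * Real.cos β) ^ (-(99/100 : ℝ))

/-- The singular weight `ψ₂ = (1+R)⁴R⁻⁴ (sin β)^{-σ}(cos β)^{-γ}`. -/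
def psi2 (α : ℝ) : ℝ → ℝ → ℝ := fun R β =>
  (1+R)^4 / R^4 * Real.sin β ^ (-(99/100 : ℝ)) * Real.cos β ^ (-(1 + α/10))

/-- `c_ω = −(2/(πα)) L₁₂(Ω)(0)`. -/
def cω (α : ℝ) (Ω : ℝ → ℝ → ℝ) : ℝ := -(2/(Real.pi*α)) * L12 Ω 0

/-- The linearized operator `L₁`. -/
def opL1 (α : ℝ) (Ω η : ℝ → ℝ → ℝ) : ℝ → ℝ → ℝ := fun R β =>
  - DR Ω R β - (3/(1+R)) * Dbeta Ω R β - Ω R β + η R β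
  + cω α Ω * (Ωbar α R β - DR (Ωbar α) R β)

/-- The linearized operator `L₂`. -/
def opL2 (α : ℝ) (Ω η : ℝ → ℝ → ℝ) : ℝ → ℝ → ℝ := fun R β =>
  - DR η R β - (3/(1+R)) * Dbeta η R β + (-2 + 3/(1+R)) * η R β
  + (2/(Real.pi*α)) * tL12 Ω R * ηbar α R β
  + cω α Ω * (ηbar α R β - DR (ηbar α) R β)

/-- `ξ̄` in Cartesian variables. -/
def ξbarC (α : ℝ) (x y : ℝ) : ℝ :=
  -(18*α^2 / cst α) * ∫ z in Set.Ioo (0:ℝ) x,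
      (y/(y^2+z^2)) * (z ^ α * (z^2+y^2) ^ (α/2) / (1 + (z^2+y^2) ^ (α/2))^4)

/-- `ξ̄` in the `(R,β)` variables, via `x = R^{1/α} cos β`, `y = R^{1/α} sin β`. -/
def ξbar (α : ℝ) : ℝ → ℝ → ℝ := fun R β =>
  ξbarC α (R ^ (1/α) * Real.cos β) (R ^ (1/α) * Real.sin β)

/-- The linearized operator `L₃`. -/
def opL3 (α : ℝ) (Ω ξ : ℝ → ℝ → ℝ) : ℝ → ℝ → ℝ := fun R β =>
  - DR ξ R β - (3/(1+R)) * Dbeta ξ R β + (-2 - 3/(1+R)) * ξ R β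
  - (2/(Real.pi*α)) * tL12 Ω R * ξbar α R β
  + cω α Ω * (3 * ξbar α R β - DR (ξbar α) R β)

/-- Weighted Sobolev norm `H^m` with radial weight `w1` and angular weight `w2`:
`‖f‖ = Σ_{0≤k≤m} ‖(D_R^k f)√w1‖₂ + Σ_{i+j≤m−1} ‖(D_R^i D_β^{j+1} f)√w2‖₂`. -/
def Hnorm (m : ℕ) (w1 w2 : ℝ → ℝ → ℝ) (f : ℝ → ℝ → ℝ) : ℝ :=
  (∑ k ∈ Finset.range (m+1),
    norm2 (fun R β => DR^[k] f R β * Real.sqrt (w1 R β)))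
  + ∑ p ∈ (Finset.range (m+1) ×ˢ Finset.range (m+1)).filter
      (fun p => p.1 + p.2 + 1 ≤ m),
      norm2 (fun R β => DR^[p.1] (Dbeta^[p.2+1] f) R β * Real.sqrt (w2 R β))

/-- Sup of `|f|` over the domain `(0,∞)×(0,π/2)`. -/
def supDom (f : ℝ → ℝ → ℝ) : ℝ :=
  ⨆ (R : Set.Ioi (0:ℝ)) (β : Set.Ioo (0:ℝ) (Real.pi/2)), |f R.1 β.1|

/-- The weighted `C¹` norm. -/
def C1norm (α : ℝ) (f : ℝ → ℝ → ℝ) : ℝ :=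
  supDom f + supDom (fun R β => (1+R)/R * DR f R β)
  + supDom (fun R β =>
      (1 + (R * Real.sin (2*β) ^ α) ^ (-(1/40 : ℝ))) * Dbeta f R β)

/-- Boundedness of `f` on the domain. -/
def BddDom (f : ℝ → ℝ → ℝ) : Prop :=
  ∃ M : ℝ, ∀ R ∈ Set.Ioi (0:ℝ), ∀ β ∈ Set.Ioo (0:ℝ) (Real.pi/2), |f R β| ≤ M

/-- Finiteness of the weighted `C¹` norm. -/
def C1Fin (α : ℝ) (f : ℝ → ℝ → ℝ) : Prop :=
  BddDom f ∧ BddDom (fun R β => (1+R)/R * DR f R β) ∧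
  BddDom (fun R β => (1 + (R * Real.sin (2*β) ^ α) ^ (-(1/40 : ℝ))) * Dbeta f R β)

/-- The weighted `W^{l,∞}` norm. -/
def Wnorm (α : ℝ) (l : ℕ) (f : ℝ → ℝ → ℝ) : ℝ :=
  (∑ k ∈ Finset.range (l+1), supDom (DR^[k] f))
  + ∑ p ∈ (Finset.range (l+1) ×ˢ Finset.range (l+1)).filter
      (fun p => p.1 + p.2 ≤ l ∧ 1 ≤ p.2),
      supDom (fun R β => Real.sin (2*β) ^ (-(α/5)) *
        DR^[p.1] (fun R' β' => Dbeta^[p.2] f R' β' / (α/10 + Real.sin (2*β'))) R β)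

/-- Finiteness of the `W^{l,∞}` norm. -/
def WFin (α : ℝ) (l : ℕ) (f : ℝ → ℝ → ℝ) : Prop :=
  (∀ k ≤ l, BddDom (DR^[k] f)) ∧
  ∀ k j : ℕ, k + j ≤ l → 1 ≤ j →
    BddDom (fun R β => Real.sin (2*β) ^ (-(α/5)) *
      DR^[k] (fun R' β' => Dbeta^[j] f R' β' / (α/10 + Real.sin (2*β'))) R β)

/-- `I(f)(x,y) = ∫₀ˣ f(z,y)/z dz`. -/
def Ifun (f : ℝ → ℝ → ℝ) : ℝ → ℝ → ℝ := fun x y => ∫ z in Set.Ioo (0:ℝ) x, f z y / z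

/-- `D_S g = (1/α)(z ∂_z g + y ∂_y g)` in Cartesian variables. -/
def DScart (α : ℝ) (g : ℝ → ℝ → ℝ) : ℝ → ℝ → ℝ := fun a b =>
  (1/α) * (a * deriv (fun a' => g a' b) a + b * deriv (fun b' => g a b') b)

/-- `D_τ g = 2y ∂_y g − 2α (y²/(y²+z²)) D_S g` in Cartesian variables. -/
def DTcart (α : ℝ) (g : ℝ → ℝ → ℝ) : ℝ → ℝ → ℝ := fun a b =>
  2*b * deriv (fun b' => g a b') b - 2*α*(b^2/(b^2+a^2)) * DScart α g a b

lemma omega_closed (τ R : ℝ) (hτ : 0 < τ) (hR : 0 < R) :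
    τ⁻¹ * (3*(R/τ)/(1+R/τ)^2) = 3*R/(τ+R)^2 := by
  have h1 : τ + R ≠ 0 := by positivity
  have h2 : 1 + R/τ = (τ+R)/τ := by field_simp
  rw [h2]
  field_simp

lemma eta_closed (τ R : ℝ) (hτ : 0 < τ) (hR : 0 < R) :
    (τ^2)⁻¹ * (6*(R/τ)/(1+R/τ)^3) = 6*R/(τ+R)^3 := by
  have h1 : τ + R ≠ 0 := by positivity
  have h2 : 1 + R/τ = (τ+R)/τ := by field_simp
  rw [h2]
  field_simp

lemma angular_pos (α : ℝ) (hα : 0 < α) :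
    0 < ∫ β in Set.Ioo (0:ℝ) (Real.pi/2), Real.cos β ^ α * Real.sin (2*β) := by
  have hpi : (0:ℝ) < Real.pi/2 := by positivity
  rw [← integral_Ioc_eq_integral_Ioo, ← intervalIntegral.integral_of_le hpi.le]
  apply intervalIntegral.intervalIntegral_pos_of_pos_on
  · apply Continuous.intervalIntegrable
    exact (Real.continuous_cos.rpow_const (fun _ => Or.inr hα.le)).mul
      (Real.continuous_sin.comp (continuous_const.mul continuous_id))
  · intro x hx
    have h1 : 0 < Real.cos x := Real.cos_pos_of_mem_Ioo ⟨by linarith [hx.1], hx.2⟩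
    have h2 : 0 < Real.sin (2*x) :=
      Real.sin_pos_of_pos_of_lt_pi (by linarith [hx.1]) (by linarith [hx.2])
    positivity
  · exact hpi

lemma radial_integral (τ R : ℝ) (hτ : 0 < τ) (hR : 0 < R) :
    ∫ s in Set.Ioi R, 3/(τ+s)^2 = 3/(τ+R) := by
  have h := integral_Ioi_of_hasDerivAt_of_nonneg' (a := R) (l := 0)
    (g := fun s => -3/(τ+s)) (g' := fun s => 3/(τ+s)^2) ?_ ?_ ?_
  · rw [h]; ring
  · intro x hx
    have hx' : 0 < x := lt_of_lt_of_le hR hx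
    have hne : τ + x ≠ 0 := by positivity
    have := (hasDerivAt_const x (-3:ℝ)).div ((hasDerivAt_id x).const_add τ) hne
    refine HasDerivAt.congr_deriv (f := fun s => -3/(τ+s)) this ?_
    simp
  · intro x hx
    positivity
  · exact Filter.Tendsto.div_atTop tendsto_const_nhds
      (Filter.tendsto_atTop_add_const_left _ _ Filter.tendsto_id)

/-- exact self-similar blowup solution of the leading order system. -/
theorem self_similar_solution_of_leading_order_system
    (α T : ℝ) (hα : 0 < α) (hα' : α < 1/10) (hT : 0 < T) :
    let Γ : ℝ → ℝ := fun β => Real.cos β ^ α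
    let c : ℝ := (2/Real.pi) * ∫ β in Set.Ioo (0:ℝ) (Real.pi/2), Γ β * Real.sin (2*β)
    let Ωstar : ℝ → ℝ := fun z => 3*z/(1+z)^2
    let ηstar : ℝ → ℝ := fun z => 6*z/(1+z)^3
    let Ω : ℝ → ℝ → ℝ → ℝ := fun R β t => (α/c) * (T-t)⁻¹ * Γ β * Ωstar (R/(T-t))
    let η : ℝ → ℝ → ℝ → ℝ := fun R β t => (α/c) * ((T-t)^2)⁻¹ * Γ β * ηstar (R/(T-t))
    0 < c ∧
      ∀ t < T, ∀ R > (0:ℝ), ∀ β ∈ Set.Icc (0:ℝ) (Real.pi/2),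
        deriv (fun τ => Ω R β τ) t = η R β t ∧
        deriv (fun τ => η R β τ) t =
          (2/(Real.pi*α)) * L12 (fun R' β' => Ω R' β' t) R * η R β t := by
  intro Γ c Ωstar ηstar Ω η
  have hI := angular_pos α hα
  have hc : 0 < c := mul_pos (by positivity) hI
  refine ⟨hc, ?_⟩
  intro t ht R hR β _
  have hτ : 0 < T - t := sub_pos.2 ht
  have hne : T - t + R ≠ 0 := by positivity
  have hΩ : ∀ τ < T, ∀ r > (0:ℝ), ∀ b, Ω r b τ = (α/c) * Γ b * (3*r/(T-τ+r)^2) := by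
    intro τ h r hr b
    rw [← omega_closed (T-τ) r (sub_pos.2 h) hr]
    simp only [Ω, Ωstar]; ring
  have hη : ∀ τ < T, ∀ r > (0:ℝ), ∀ b, η r b τ = (α/c) * Γ b * (6*r/(T-τ+r)^3) := by
    intro τ h r hr b
    rw [← eta_closed (T-τ) r (sub_pos.2 h) hr]
    simp only [η, ηstar]; ring
  have hev : ∀ᶠ τ in nhds t, τ < T := Iio_mem_nhds ht
  have hd : HasDerivAt (fun τ : ℝ => T - τ + R) (-1) t := by
    simpa using ((hasDerivAt_id t).const_sub T).add_const R
  constructor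
  · rw [Filter.EventuallyEq.deriv_eq (hev.mono fun τ h => hΩ τ h R hR β), hη t ht R hR β]
    have h := (((hasDerivAt_const t (3*R)).div (hd.pow 2) (pow_ne_zero 2 hne)).const_mul
      ((α/c) * Γ β)).deriv
    refine Eq.trans h ?_
    simp only [Pi.pow_apply]
    field_simp
    norm_num
    ring
  · have hL : L12 (fun R' β' => Ω R' β' t) R = α * Real.pi / 2 * (3/(T-t+R)) := by
      unfold L12
      rw [← radial_integral (T-t) R hτ hR, ← integral_const_mul]
      apply setIntegral_congr_fun measurableSet_Ioi
      intro s hs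
      have hs' : 0 < s := lt_trans hR hs
      have hns : T - t + s ≠ 0 := by positivity
      have e : ∀ b, Ω s b t * Real.sin (2*b) / s
          = (α/c) * (3/(T-t+s)^2) * (Real.cos b ^ α * Real.sin (2*b)) := by
        intro b
        rw [hΩ t ht s hs' b]
        simp only [Γ]
        field_simp
      simp only [e]
      rw [integral_const_mul]
      have hcI : (∫ b in Set.Ioo (0:ℝ) (Real.pi/2), Real.cos b ^ α * Real.sin (2*b))
          = c * (Real.pi/2) := by
        simp only [c, Γ]
        field_simp
      rw [hcI]
      have := hc.ne'
      field_simp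
    rw [hL, Filter.EventuallyEq.deriv_eq (hev.mono fun τ h => hη τ h R hR β), hη t ht R hR β]
    have h := (((hasDerivAt_const t (6*R)).div (hd.pow 3) (pow_ne_zero 3 hne)).const_mul
      ((α/c) * Γ β)).deriv
    refine Eq.trans h ?_
    simp only [Pi.pow_apply]
    have := Real.pi_pos.ne'
    field_simp
    norm_num
    ring

end Paper
end
end

section
/- Let δ, δ₁, δ₂ > 0 and define the weights φ(R,β) = ((1+R)⁴/R⁴) sin(2β)^{−δ} and ψ(R,β) = ((1+R)⁴/R⁴) (sin β)^{−δ₁} (cos β)^{−δ₂} on (0,∞)×(0,π/2). Define the local operators L₁₀(Ω,η) = −D_R Ω − (3/(1+R)) D_β Ω − Ω + η, L₂₀(η) = −D_R η − (3/(1+R)) D_β η + (−2 + 3/(1+R)) η, and L₃₀(ξ) = −D_R ξ − (3/(1+R)) D_β ξ + (−2 − 3/(1+R)) ξ. Then for all continuously differentiable Ω, η, ξ with compact support contained in (0,∞)×(0,π/2): ⟨L₁₀(Ω,η), Ω φ⟩ + ⟨L₂₀(η), η φ⟩ ≤ (−1/4 + 3|1−δ|) (‖Ω φ^{1/2}‖₂²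 + ‖η φ^{1/2}‖₂²), and ⟨L₃₀(ξ), ξ ψ⟩ ≤ (−1/2 + 3 max(|1−δ₁|, |1−δ₂|)) ‖ξ ψ^{1/2}‖₂². -/
open Real MeasureTheory Set

noncomputable section

namespace Paper

/-- The weight `φ(R,β) = (1+R)⁴R⁻⁴ sin(2β)^{-δ}`. -/
def wphi (δ : ℝ) : ℝ → ℝ → ℝ := fun R β => (1+R)^4 / R^4 * Real.sin (2*β) ^ (-δ)

/-- The weight `ψ(R,β) = (1+R)⁴R⁻⁴ (sin β)^{-δ₁} (cos β)^{-δ₂}`. -/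
def wpsi (δ₁ δ₂ : ℝ) : ℝ → ℝ → ℝ := fun R β =>
  (1+R)^4 / R^4 * Real.sin β ^ (-δ₁) * Real.cos β ^ (-δ₂)

/-- The local operator `L₁₀`. -/
def L10 (Ω η : ℝ → ℝ → ℝ) : ℝ → ℝ → ℝ := fun R β =>
  - DR Ω R β - (3/(1+R)) * Dbeta Ω R β - Ω R β + η R β

/-- The local operator `L₂₀`. -/
def L20 (η : ℝ → ℝ → ℝ) : ℝ → ℝ → ℝ := fun R β =>
  - DR η R β - (3/(1+R)) * Dbeta η R β + (-2 + 3/(1+R)) * η R β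

/-- The local operator `L₃₀`. -/
def L30 (ξ : ℝ → ℝ → ℝ) : ℝ → ℝ → ℝ := fun R β =>
  - DR ξ R β - (3/(1+R)) * Dbeta ξ R β + (-2 - 3/(1+R)) * ξ R β

lemma isOpen_Qdom : IsOpen Qdom := isOpen_Ioi.prod isOpen_Ioo

lemma glue_contDiff {u : ℝ × ℝ → ℝ} {K : Set (ℝ × ℝ)} (hK : IsCompact K) (hKQ : K ⊆ Qdom)
    (h0 : ∀ p, p ∉ K → u p = 0) {n : WithTop ℕ∞} (hu : ContDiffOn ℝ n u Qdom) :
    ContDiff ℝ n u := by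
  rw [contDiff_iff_contDiffAt]
  intro p
  by_cases hp : p ∈ K
  · exact hu.contDiffAt (isOpen_Qdom.mem_nhds (hKQ hp))
  · have : u =ᶠ[nhds p] fun _ => (0:ℝ) := by
      filter_upwards [hK.isClosed.isOpen_compl.mem_nhds hp] with q hq using h0 q hq
    exact contDiffAt_const.congr_of_eventuallyEq this

lemma glue_integrable {u : ℝ × ℝ → ℝ} {K : Set (ℝ × ℝ)} (hK : IsCompact K) (hKQ : K ⊆ Qdom)
    (h0 : ∀ p, p ∉ K → u p = 0) (hu : ContinuousOn u Qdom) : Integrable u := by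
  have h1 : ContDiff ℝ 0 u := glue_contDiff hK hKQ h0 (contDiffOn_zero.2 hu)
  exact h1.continuous.integrable_of_hasCompactSupport (HasCompactSupport.intro hK h0)

lemma hasDerivAt_fst {F : ℝ × ℝ → ℝ} (hF : ContDiff ℝ 1 F) (x y : ℝ) :
    HasDerivAt (fun r => F (r, y)) (fderiv ℝ F (x, y) (1, 0)) x := by
  have h := ((hF.differentiable one_ne_zero) (x, y)).hasFDerivAt
  have h2 : HasDerivAt (fun r : ℝ => (r, y)) ((1:ℝ), (0:ℝ)) x :=
    (hasDerivAt_id x).prodMk (hasDerivAt_const x y)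
  exact h.comp_hasDerivAt x h2

lemma hasDerivAt_snd {F : ℝ × ℝ → ℝ} (hF : ContDiff ℝ 1 F) (x y : ℝ) :
    HasDerivAt (fun r => F (x, r)) (fderiv ℝ F (x, y) (0, 1)) y := by
  have h := ((hF.differentiable one_ne_zero) (x, y)).hasFDerivAt
  have h2 : HasDerivAt (fun r : ℝ => (x, r)) ((0:ℝ), (1:ℝ)) y :=
    (hasDerivAt_const y x).prodMk (hasDerivAt_id y)
  exact h.comp_hasDerivAt y h2

lemma integrable_fderiv_apply {F : ℝ × ℝ → ℝ} (hF : ContDiff ℝ 1 F) (hc : HasCompactSupport F)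
    (v : ℝ × ℝ) : Integrable (fun p => fderiv ℝ F p v) := by
  apply Continuous.integrable_of_hasCompactSupport
  · exact (hF.continuous_fderiv one_ne_zero).clm_apply continuous_const
  · exact hc.fderiv_apply ℝ v

lemma slice_compact_fst {F : ℝ × ℝ → ℝ} (hF : Continuous F) (hc : HasCompactSupport F) (y : ℝ) :
    Integrable (fun r => F (r, y)) := by
  apply Continuous.integrable_of_hasCompactSupport (by fun_prop)
  apply HasCompactSupport.intro (K := Prod.fst '' tsupport F) (hc.isCompact.image continuous_fst)
  intro x hx
  by_contra h
  exact hx ⟨(x, y), subset_tsupport _ h, rfl⟩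

lemma slice_compact_snd {F : ℝ × ℝ → ℝ} (hF : Continuous F) (hc : HasCompactSupport F) (x : ℝ) :
    Integrable (fun r => F (x, r)) := by
  apply Continuous.integrable_of_hasCompactSupport (by fun_prop)
  apply HasCompactSupport.intro (K := Prod.snd '' tsupport F) (hc.isCompact.image continuous_snd)
  intro y hy
  by_contra h
  exact hy ⟨(x, y), subset_tsupport _ h, rfl⟩

lemma integral_fderiv_fst {F : ℝ × ℝ → ℝ} (hF : ContDiff ℝ 1 F) (hc : HasCompactSupport F) :
    ∫ p, fderiv ℝ F p (1, 0) = 0 := by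
  have hi := integrable_fderiv_apply hF hc (1, 0)
  rw [Measure.volume_eq_prod] at hi ⊢
  rw [integral_prod_symm _ hi]
  have : ∀ y : ℝ, ∫ x : ℝ, fderiv ℝ F (x, y) (1, 0) = 0 := fun y =>
    integral_eq_zero_of_hasDerivAt_of_integrable (fun x => hasDerivAt_fst hF x y)
      (slice_compact_fst (F := fun p => fderiv ℝ F p (1, 0))
        ((hF.continuous_fderiv one_ne_zero).clm_apply continuous_const) (hc.fderiv_apply ℝ _) y)
      (slice_compact_fst hF.continuous hc y)
  simp [this]

lemma integral_fderiv_snd {F : ℝ × ℝ → ℝ} (hF : ContDiff ℝ 1 F) (hc : HasCompactSupport F) :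
    ∫ p, fderiv ℝ F p (0, 1) = 0 := by
  have hi := integrable_fderiv_apply hF hc (0, 1)
  rw [Measure.volume_eq_prod] at hi ⊢
  rw [integral_prod _ hi]
  have : ∀ x : ℝ, ∫ y : ℝ, fderiv ℝ F (x, y) (0, 1) = 0 := fun x =>
    integral_eq_zero_of_hasDerivAt_of_integrable (fun y => hasDerivAt_snd hF x y)
      (slice_compact_snd (F := fun p => fderiv ℝ F p (0, 1))
        ((hF.continuous_fderiv one_ne_zero).clm_apply continuous_const) (hc.fderiv_apply ℝ _) x)
      (slice_compact_snd hF.continuous hc x)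
  simp [this]

lemma inner2_eq {f g : ℝ → ℝ → ℝ}
    (h : Integrable (fun p : ℝ × ℝ => f p.1 p.2 * g p.1 p.2)) :
    inner2 f g = ∫ p in Qdom, f p.1 p.2 * g p.1 p.2 := by
  unfold inner2 Qdom
  rw [Measure.volume_eq_prod] at h ⊢
  rw [setIntegral_prod _ h.integrableOn]

/-- The radial weight times an angular weight. -/
def wgt (a : ℝ → ℝ) : ℝ → ℝ → ℝ := fun R β => (1+R)^4 / R^4 * a β

/-- Transport part of the local operators. -/
def transp (f : ℝ → ℝ → ℝ) : ℝ → ℝ → ℝ := fun R β =>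
  - DR f R β - (3/(1+R)) * Dbeta f R β

lemma contDiffOn_wgt {a : ℝ → ℝ} (ha : ContDiffOn ℝ 1 a (Ioo 0 (π/2))) :
    ContDiffOn ℝ 1 (fun p : ℝ × ℝ => wgt a p.1 p.2) Qdom := by
  unfold wgt
  apply ContDiffOn.mul
  · apply ContDiffOn.div
    · fun_prop
    · fun_prop
    · rintro p ⟨hp, -⟩
      have : (0:ℝ) < p.1 := hp
      positivity
  · exact ha.comp contDiff_snd.contDiffOn (fun p hp => hp.2)

lemma continuousOn_transp {f : ℝ → ℝ → ℝ} (hf : ContDiff ℝ 1 (Function.uncurry f)) :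
    ContinuousOn (fun p : ℝ × ℝ => transp f p.1 p.2) Qdom := by
  have e : (fun p : ℝ × ℝ => transp f p.1 p.2) = fun p : ℝ × ℝ =>
      - (p.1 * fderiv ℝ (Function.uncurry f) p (1, 0))
      - (3/(1+p.1)) * (Real.sin (2*p.2) * fderiv ℝ (Function.uncurry f) p (0, 1)) := by
    ext p
    have h1 := (hasDerivAt_fst hf p.1 p.2).deriv
    have h2 := (hasDerivAt_snd hf p.1 p.2).deriv
    simp only [Function.uncurry_apply_pair, Prod.mk.eta] at h1 h2
    simp only [transp, DR, Dbeta, h1, h2]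
  rw [e]
  have c1 : Continuous fun p => fderiv ℝ (Function.uncurry f) p (1, 0) :=
    (hf.continuous_fderiv one_ne_zero).clm_apply continuous_const
  have c2 : Continuous fun p => fderiv ℝ (Function.uncurry f) p (0, 1) :=
    (hf.continuous_fderiv one_ne_zero).clm_apply continuous_const
  have c3 : ContinuousOn (fun p : ℝ × ℝ => 3/(1+p.1)) Qdom := by
    apply ContinuousOn.div
    · fun_prop
    · fun_prop
    · rintro p ⟨hp, -⟩
      have : (0:ℝ) < p.1 := hp
      positivity
  have c4 : Continuous fun p : ℝ × ℝ => Real.sin (2*p.2) := by fun_prop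
  exact ((continuous_fst.mul c1).neg.continuousOn).sub (c3.mul (c4.mul c2).continuousOn)

lemma key {f : ℝ → ℝ → ℝ} (hf : ContDiff ℝ 1 (Function.uncurry f)) (hs : suppIn f)
    {a a' g : ℝ → ℝ} (ha : ContDiffOn ℝ 1 a (Ioo 0 (π/2)))
    (ha' : ∀ β ∈ Ioo 0 (π/2), HasDerivAt a (a' β) β)
    (hg : ∀ β ∈ Ioo 0 (π/2), 2 * Real.cos (2*β) * a β + Real.sin (2*β) * a' β = g β * a β) :
    ∃ Z : ℝ × ℝ → ℝ, Integrable Z ∧ ∫ p in Qdom, Z p = 0 ∧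
      ∀ p ∈ Qdom, transp f p.1 p.2 * (f p.1 p.2 * wgt a p.1 p.2) =
        (1/2 - 2/(1+p.1) + 3/2 * g p.2 / (1+p.1)) * (f p.1 p.2 ^ 2 * wgt a p.1 p.2) + Z p := by
  obtain ⟨K, hK, hKQ, h0⟩ := hs
  have hfz : ∀ p : ℝ × ℝ, p ∉ K → f p.1 p.2 = 0 := fun p hp => h0 p.1 p.2 hp
  have hf' : ContDiff ℝ 1 (fun p : ℝ × ℝ => f p.1 p.2) := hf
  have hw := contDiffOn_wgt ha
  let F : ℝ × ℝ → ℝ := fun p => -(1/2) * p.1 * (f p.1 p.2 ^ 2 * wgt a p.1 p.2)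
  let G : ℝ × ℝ → ℝ := fun p => -(3/2) * (1 + p.1)⁻¹ * Real.sin (2*p.2) *
    (f p.1 p.2 ^ 2 * wgt a p.1 p.2)
  have hF0 : ∀ p, p ∉ K → F p = 0 := fun p hp => by simp [F, hfz p hp]
  have hG0 : ∀ p, p ∉ K → G p = 0 := fun p hp => by simp [G, hfz p hp]
  have hfw : ContDiffOn ℝ 1 (fun p : ℝ × ℝ => f p.1 p.2 ^ 2 * wgt a p.1 p.2) Qdom :=
    (hf'.pow 2).contDiffOn.mul hw
  have hF : ContDiff ℝ 1 F := by
    apply glue_contDiff hK hKQ hF0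
    exact ContDiffOn.mul (by fun_prop) hfw
  have hG : ContDiff ℝ 1 G := by
    apply glue_contDiff hK hKQ hG0
    refine ContDiffOn.mul (ContDiffOn.mul (ContDiffOn.mul (by fun_prop) ?_) ?_) hfw
    · apply ContDiffOn.inv
      · fun_prop
      · rintro p ⟨hp, -⟩
        have : (0:ℝ) < p.1 := hp
        positivity
    · exact (Real.contDiff_sin.comp (contDiff_const.mul contDiff_snd)).contDiffOn
  have hFc := HasCompactSupport.intro hK hF0
  have hGc := HasCompactSupport.intro hK hG0
  refine ⟨fun p => fderiv ℝ F p (1, 0) + fderiv ℝ G p (0, 1),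
    (integrable_fderiv_apply hF hFc _).add (integrable_fderiv_apply hG hGc _), ?_, ?_⟩
  · rw [setIntegral_eq_integral_of_forall_compl_eq_zero, integral_add
      (integrable_fderiv_apply hF hFc _) (integrable_fderiv_apply hG hGc _),
      integral_fderiv_fst hF hFc, integral_fderiv_snd hG hGc, add_zero]
    intro p hp
    have hpK : p ∉ K := fun h => hp (hKQ h)
    have e1 : F =ᶠ[nhds p] fun _ => (0:ℝ) := by
      filter_upwards [hK.isClosed.isOpen_compl.mem_nhds hpK] with q hq using hF0 q hq
    have e2 : G =ᶠ[nhds p] fun _ => (0:ℝ) := by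
      filter_upwards [hK.isClosed.isOpen_compl.mem_nhds hpK] with q hq using hG0 q hq
    rw [e1.fderiv_eq, e2.fderiv_eq]
    simp
  · rintro ⟨R, β⟩ ⟨hR, hβ⟩
    have hR : (0:ℝ) < R := hR
    have hβ : β ∈ Ioo 0 (π/2) := hβ
    have d1 := hasDerivAt_fst hf R β
    have d2 := hasDerivAt_snd hf R β
    simp only [Function.uncurry_apply_pair] at d1 d2
    have hR1 : (1 + R) ≠ 0 := by positivity
    -- radial derivative
    have r1 : HasDerivAt (fun r : ℝ => (1+r)^4 / r^4)
        ((4*(1+R)^3 * R^4 - (1+R)^4 * (4*R^3)) / (R^4)^2) R := by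
      have h1 : HasDerivAt (fun r : ℝ => (1+r)^4) (4*(1+R)^3) R := by
        simpa using ((hasDerivAt_id R).const_add 1).fun_pow 4
      have h2 : HasDerivAt (fun r : ℝ => r^4) (4*R^3) R := by
        simpa using (hasDerivAt_id' R).fun_pow 4
      exact h1.div h2 (by positivity)
    have r2 := ((hasDerivAt_id R).const_mul (-(1/2) : ℝ)).mul
      ((d1.pow 2).mul (r1.mul_const (a β)))
    have r3 := (hasDerivAt_fst hF R β).unique r2
    have s1 : HasDerivAt (fun b : ℝ => Real.sin (2*b)) (Real.cos (2*β) * 2) β := by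
      have := ((hasDerivAt_id β).const_mul (2:ℝ)).sin
      simpa using this
    have s2 := (s1.const_mul (-(3/2) * (1+R)⁻¹)).mul
      ((d2.pow 2).mul ((ha' β hβ).const_mul ((1+R)^4 / R^4)))
    have s3 := (hasDerivAt_snd hG R β).unique s2
    have hgb := hg β hβ
    simp only [r3, s3, transp, DR, Dbeta, wgt, d1.deriv, d2.deriv]
    simp only [Pi.mul_apply, Pi.pow_apply, id]
    generalize fderiv ℝ (Function.uncurry f) (R, β) (1, 0) = X
    generalize fderiv ℝ (Function.uncurry f) (R, β) (0, 1) = Y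
    have : g β * a β = 2 * Real.cos (2*β) * a β + Real.sin (2*β) * a' β := hgb.symm
    have e : (1/2 - 2/(1+R) + 3/2 * g β / (1+R)) * (f R β ^ 2 * ((1+R)^4 / R^4 * a β)) =
      ((1/2 - 2/(1+R)) * a β + 3/2 * (g β * a β) / (1+R)) * (f R β ^ 2 * ((1+R)^4 / R^4)) := by
      ring
    rw [e, this]
    field_simp
    ring

lemma integrable_mul_wgt {f h : ℝ → ℝ → ℝ} (hf : ContDiff ℝ 1 (Function.uncurry f))
    (hs : suppIn f) {a : ℝ → ℝ} (ha : ContDiffOn ℝ 1 a (Ioo 0 (π/2)))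
    (hh : ContinuousOn (fun p : ℝ × ℝ => h p.1 p.2) Qdom) :
    Integrable (fun p : ℝ × ℝ => h p.1 p.2 * (f p.1 p.2 * wgt a p.1 p.2)) := by
  obtain ⟨K, hK, hKQ, h0⟩ := hs
  have hf' : Continuous (fun p : ℝ × ℝ => f p.1 p.2) := hf.continuous
  refine glue_integrable hK hKQ (fun p hp => ?_)
    (hh.mul (hf'.continuousOn.mul (contDiffOn_wgt ha).continuousOn))
  rw [h0 p.1 p.2 hp]; simp

lemma norm2_sq {f : ℝ → ℝ → ℝ} (hf : ContDiff ℝ 1 (Function.uncurry f))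
    (hs : suppIn f) {a : ℝ → ℝ} (ha : ContDiffOn ℝ 1 a (Ioo 0 (π/2)))
    (hpos : ∀ β ∈ Ioo 0 (π/2), 0 ≤ a β) :
    (norm2 (fun R β => f R β * Real.sqrt (wgt a R β)))^2 =
      ∫ p in Qdom, f p.1 p.2 ^ 2 * wgt a p.1 p.2 := by
  have hf' : Continuous (fun p : ℝ × ℝ => f p.1 p.2) := hf.continuous
  have hw : ∀ p ∈ Qdom, 0 ≤ wgt a p.1 p.2 := by
    rintro p ⟨hp1, hp2⟩
    have := hpos _ hp2
    have h1 : (0:ℝ) < p.1 := hp1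
    unfold wgt; positivity
  unfold norm2
  rw [Real.sq_sqrt]
  · have hi : Integrable (fun p : ℝ × ℝ => (f p.1 p.2 * Real.sqrt (wgt a p.1 p.2)) *
        (f p.1 p.2 * Real.sqrt (wgt a p.1 p.2))) := by
      obtain ⟨K, hK, hKQ, h0⟩ := hs
      have c := hf'.continuousOn.mul ((contDiffOn_wgt ha).continuousOn.sqrt)
      refine glue_integrable hK hKQ (fun p hp => ?_) (c.mul c)
      rw [h0 p.1 p.2 hp]; simp
    rw [inner2_eq hi]
    apply setIntegral_congr_fun isOpen_Qdom.measurableSet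
    intro p hp
    have := Real.mul_self_sqrt (hw p hp)
    simp only
    linear_combination (f p.1 p.2)^2 * this
  · unfold inner2
    exact integral_nonneg fun R => integral_nonneg fun β => mul_self_nonneg _

lemma continuousOn_inv_R (c : ℝ) : ContinuousOn (fun p : ℝ × ℝ => c/(1+p.1)) Qdom := by
  apply ContinuousOn.div
  · fun_prop
  · fun_prop
  · rintro p ⟨hp, -⟩
    have : (0:ℝ) < p.1 := hp
    positivity

lemma integrable_sq {f : ℝ → ℝ → ℝ} (hf : ContDiff ℝ 1 (Function.uncurry f))
    (hs : suppIn f) {a : ℝ → ℝ} (ha : ContDiffOn ℝ 1 a (Ioo 0 (π/2))) :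
    Integrable (fun p : ℝ × ℝ => f p.1 p.2 ^ 2 * wgt a p.1 p.2) := by
  have hf' : Continuous (fun p : ℝ × ℝ => f p.1 p.2) := hf.continuous
  refine (integrable_mul_wgt hf hs ha (h := f) hf'.continuousOn).congr ?_
  filter_upwards with p
  ring

lemma wgt_nonneg {a : ℝ → ℝ} (hpos : ∀ β ∈ Ioo 0 (π/2), 0 ≤ a β) :
    ∀ p ∈ Qdom, 0 ≤ wgt a p.1 p.2 := by
  rintro p ⟨hp1, hp2⟩
  have := hpos _ hp2
  have h1 : (0:ℝ) < p.1 := hp1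
  unfold wgt; positivity

lemma part1 {Ω η : ℝ → ℝ → ℝ}
    (hΩ : ContDiff ℝ 1 (Function.uncurry Ω)) (hη : ContDiff ℝ 1 (Function.uncurry η))
    (hΩs : suppIn Ω) (hηs : suppIn η)
    {a a' g : ℝ → ℝ} (ha : ContDiffOn ℝ 1 a (Ioo 0 (π/2)))
    (hpos : ∀ β ∈ Ioo 0 (π/2), 0 ≤ a β)
    (ha' : ∀ β ∈ Ioo 0 (π/2), HasDerivAt a (a' β) β)
    (hg : ∀ β ∈ Ioo 0 (π/2), 2 * Real.cos (2*β) * a β + Real.sin (2*β) * a' β = g β * a β)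
    {M : ℝ} (hM : 0 ≤ M) (hgM : ∀ β ∈ Ioo 0 (π/2), g β ≤ 2 * M) :
    inner2 (L10 Ω η) (fun R β => Ω R β * wgt a R β)
        + inner2 (L20 η) (fun R β => η R β * wgt a R β)
      ≤ (-(1/4) + 3*M) *
        ((norm2 (fun R β => Ω R β * Real.sqrt (wgt a R β)))^2
          + (norm2 (fun R β => η R β * Real.sqrt (wgt a R β)))^2) := by
  have cΩ : Continuous (fun p : ℝ × ℝ => Ω p.1 p.2) := hΩ.continuous
  have cη : Continuous (fun p : ℝ × ℝ => η p.1 p.2) := hη.continuous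
  obtain ⟨Z1, iZ1, hZ1, e1⟩ := key hΩ hΩs ha ha' hg
  obtain ⟨Z2, iZ2, hZ2, e2⟩ := key hη hηs ha ha' hg
  have i1 := integrable_mul_wgt hΩ hΩs ha (h := L10 Ω η)
    (((continuousOn_transp hΩ).sub cΩ.continuousOn).add cη.continuousOn)
  have i2 := integrable_mul_wgt hη hηs ha (h := L20 η)
    ((continuousOn_transp hη).add
      ((continuousOn_const.add (continuousOn_inv_R 3)).mul cη.continuousOn))
  have j1 := integrable_sq hΩ hΩs ha
  have j2 := integrable_sq hη hηs ha
  rw [norm2_sq hΩ hΩs ha hpos, norm2_sq hη hηs ha hpos, inner2_eq i1, inner2_eq i2,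
    ← integral_add i1.integrableOn i2.integrableOn,
    ← integral_add j1.integrableOn j2.integrableOn, ← integral_const_mul]
  have hZ : ∫ p in Qdom, (Z1 p + Z2 p) = 0 := by
    rw [integral_add iZ1.integrableOn iZ2.integrableOn, hZ1, hZ2, add_zero]
  have jj : Integrable (fun p : ℝ × ℝ => (-(1/4) + 3*M) *
      (Ω p.1 p.2 ^ 2 * wgt a p.1 p.2 + η p.1 p.2 ^ 2 * wgt a p.1 p.2)) := (j1.add j2).const_mul _
  have iZ : Integrable (fun p => Z1 p + Z2 p) := iZ1.add iZ2
  rw [← add_zero (∫ p in Qdom, _ * _), ← hZ,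
    ← integral_add jj.integrableOn iZ.integrableOn]
  refine setIntegral_mono_on (i1.add i2).integrableOn
    (jj.add iZ).integrableOn isOpen_Qdom.measurableSet ?_
  intro p hp
  have hw := wgt_nonneg hpos p hp
  have e1 := e1 p hp
  have e2 := e2 p hp
  have hgp := hgM p.2 hp.2
  have hR : (0:ℝ) < p.1 := hp.1
  have l1 : L10 Ω η p.1 p.2 = transp Ω p.1 p.2 - Ω p.1 p.2 + η p.1 p.2 := rfl
  have l2 : L20 η p.1 p.2 = transp η p.1 p.2 + (-2 + 3/(1+p.1)) * η p.1 p.2 := rfl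
  have t0 : 0 < 1/(1+p.1) := by positivity
  have t1 : 1/(1+p.1) ≤ 1 := by
    rw [div_le_one (by positivity)]; linarith
  have q2 : 2/(1+p.1) = 2 * (1/(1+p.1)) := by ring
  have q3 : 3/(1+p.1) = 3 * (1/(1+p.1)) := by ring
  have q4 : 3/2 * g p.2/(1+p.1) = 3/2 * g p.2 * (1/(1+p.1)) := by ring
  rw [q2, q4] at e1 e2
  rw [q3] at l2
  simp only [l1, l2]
  generalize 1/(1+p.1) = t at *
  generalize wgt a p.1 p.2 = w at *
  generalize Ω p.1 p.2 = x at *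
  generalize η p.1 p.2 = y at *
  generalize g p.2 = G at *
  have hG : 3/2 * G * t ≤ 3 * M := by nlinarith
  have q : (-(1/2) - 2*t + 3/2*G*t) * x^2 + x*y + (-(3/2) + t + 3/2*G*t) * y^2
      ≤ (-(1/4) + 3*M) * (x^2 + y^2) := by
    have h1 : (-(1/4) - 2*t) * x^2 + x*y + (-(5/4) + t) * y^2 ≤ 0 := by
      have hA : 0 < 1/4 + 2*t := by positivity
      have hD : 0 ≤ (1/4 + 2*t) * (5/4 - t) - 1/4 := by nlinarith
      have h2 : 0 ≤ (1/4 + 2*t) * ((1/4 + 2*t) * x^2 - x*y + (5/4 - t) * y^2) := by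
        nlinarith [sq_nonneg ((1/4 + 2*t) * x - y/2), mul_nonneg hD (sq_nonneg y)]
      have := nonneg_of_mul_nonneg_right h2 hA
      linarith
    nlinarith [mul_nonneg (sub_nonneg.2 hG) (add_nonneg (sq_nonneg x) (sq_nonneg y))]
  have q' := mul_le_mul_of_nonneg_right q hw
  linarith

lemma part2 {ξ : ℝ → ℝ → ℝ}
    (hξ : ContDiff ℝ 1 (Function.uncurry ξ)) (hξs : suppIn ξ)
    {a a' g : ℝ → ℝ} (ha : ContDiffOn ℝ 1 a (Ioo 0 (π/2)))
    (hpos : ∀ β ∈ Ioo 0 (π/2), 0 ≤ a β)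
    (ha' : ∀ β ∈ Ioo 0 (π/2), HasDerivAt a (a' β) β)
    (hg : ∀ β ∈ Ioo 0 (π/2), 2 * Real.cos (2*β) * a β + Real.sin (2*β) * a' β = g β * a β)
    {M : ℝ} (hM : 0 ≤ M) (hgM : ∀ β ∈ Ioo 0 (π/2), g β ≤ 2 * M) :
    inner2 (L30 ξ) (fun R β => ξ R β * wgt a R β)
      ≤ (-(1/2) + 3*M) * (norm2 (fun R β => ξ R β * Real.sqrt (wgt a R β)))^2 := by
  have cξ : Continuous (fun p : ℝ × ℝ => ξ p.1 p.2) := hξ.continuous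
  obtain ⟨Z, iZ, hZ, e⟩ := key hξ hξs ha ha' hg
  have i1 := integrable_mul_wgt hξ hξs ha (h := L30 ξ)
    ((continuousOn_transp hξ).add
      ((continuousOn_const.sub (continuousOn_inv_R 3)).mul cξ.continuousOn))
  have j1 := integrable_sq hξ hξs ha
  rw [norm2_sq hξ hξs ha hpos, inner2_eq i1, ← integral_const_mul]
  rw [← add_zero (∫ p in Qdom, _ * (_ ^ 2 * _)), ← hZ,
    ← integral_add (j1.const_mul _).integrableOn iZ.integrableOn]
  refine setIntegral_mono_on i1.integrableOn
    ((j1.const_mul _).add iZ).integrableOn isOpen_Qdom.measurableSet ?_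
  intro p hp
  have hw := wgt_nonneg hpos p hp
  have e := e p hp
  have hgp := hgM p.2 hp.2
  have hR : (0:ℝ) < p.1 := hp.1
  have l1 : L30 ξ p.1 p.2 = transp ξ p.1 p.2 + (-2 - 3/(1+p.1)) * ξ p.1 p.2 := rfl
  have t0 : 0 < 1/(1+p.1) := by positivity
  have t1 : 1/(1+p.1) ≤ 1 := by
    rw [div_le_one (by positivity)]; linarith
  have q2 : 2/(1+p.1) = 2 * (1/(1+p.1)) := by ring
  have q3 : 3/(1+p.1) = 3 * (1/(1+p.1)) := by ring
  have q4 : 3/2 * g p.2/(1+p.1) = 3/2 * g p.2 * (1/(1+p.1)) := by ring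
  rw [q2, q4] at e
  rw [q3] at l1
  simp only [l1]
  generalize 1/(1+p.1) = t at *
  generalize wgt a p.1 p.2 = w at *
  generalize ξ p.1 p.2 = x at *
  generalize g p.2 = G at *
  have hG : 3/2 * G * t ≤ 3 * M := by nlinarith
  have q : (-(3/2) - 5*t + 3/2*G*t) * (x^2*w) ≤ (-(1/2) + 3*M) * (x^2*w) := by
    apply mul_le_mul_of_nonneg_right _ (by positivity)
    linarith
  linarith

lemma sin_two_pos {β : ℝ} (h : β ∈ Ioo 0 (π/2)) : 0 < Real.sin (2*β) :=
  Real.sin_pos_of_pos_of_lt_pi (by linarith [h.1]) (by linarith [h.2])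

lemma sin_pos' {β : ℝ} (h : β ∈ Ioo 0 (π/2)) : 0 < Real.sin β :=
  Real.sin_pos_of_pos_of_lt_pi h.1 (by linarith [h.2, Real.pi_pos])

lemma cos_pos' {β : ℝ} (h : β ∈ Ioo 0 (π/2)) : 0 < Real.cos β :=
  Real.cos_pos_of_mem_Ioo ⟨by linarith [h.1, Real.pi_pos], h.2⟩

/-- damping estimates for the local operators `L₁₀, L₂₀, L₃₀`. -/
theorem damping_local_operators
    (δ δ₁ δ₂ : ℝ) (hδ : 0 < δ) (hδ₁ : 0 < δ₁) (hδ₂ : 0 < δ₂)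
    (Ω η ξ : ℝ → ℝ → ℝ)
    (hΩ : ContDiff ℝ 1 (Function.uncurry Ω))
    (hη : ContDiff ℝ 1 (Function.uncurry η))
    (hξ : ContDiff ℝ 1 (Function.uncurry ξ))
    (hΩs : suppIn Ω) (hηs : suppIn η) (hξs : suppIn ξ) :
    inner2 (L10 Ω η) (fun R β => Ω R β * wphi δ R β)
        + inner2 (L20 η) (fun R β => η R β * wphi δ R β)
      ≤ (-(1/4) + 3*|1-δ|) *
        ((norm2 (fun R β => Ω R β * Real.sqrt (wphi δ R β)))^2
          + (norm2 (fun R β => η R β * Real.sqrt (wphi δ R β)))^2) ∧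
    inner2 (L30 ξ) (fun R β => ξ R β * wpsi δ₁ δ₂ R β)
      ≤ (-(1/2) + 3 * max |1-δ₁| |1-δ₂|) *
        (norm2 (fun R β => ξ R β * Real.sqrt (wpsi δ₁ δ₂ R β)))^2 := by
  refine ⟨?_, ?_⟩
  · refine part1 (a := fun β => Real.sin (2*β) ^ (-δ))
      (a' := fun β => Real.cos (2*β) * 2 * (-δ) * Real.sin (2*β) ^ (-δ - 1))
      (g := fun β => 2 * (1-δ) * Real.cos (2*β)) hΩ hη hΩs hηs ?_ ?_ ?_ ?_ (abs_nonneg _) ?_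
    · refine ContDiffOn.rpow_const_of_ne ?_ fun β hβ => (sin_two_pos hβ).ne'
      exact (Real.contDiff_sin.comp (contDiff_const.mul contDiff_id)).contDiffOn
    · exact fun β hβ => Real.rpow_nonneg (sin_two_pos hβ).le _
    · intro β hβ
      have s1 : HasDerivAt (fun b : ℝ => Real.sin (2*b)) (Real.cos (2*β) * 2) β := by
        have := ((hasDerivAt_id β).const_mul (2:ℝ)).sin
        simpa using this
      exact s1.rpow_const (Or.inl (sin_two_pos hβ).ne')
    · intro β hβ
      have h := sin_two_pos hβ
      rw [Real.rpow_sub_one h.ne']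
      field_simp
      ring
    · intro β hβ
      have : (1-δ) * Real.cos (2*β) ≤ |1-δ| := by
        refine (le_abs_self _).trans ?_
        rw [abs_mul]
        exact mul_le_of_le_one_right (abs_nonneg _) (Real.abs_cos_le_one _)
      linarith
  · have hw : wpsi δ₁ δ₂ = wgt (fun β => Real.sin β ^ (-δ₁) * Real.cos β ^ (-δ₂)) := by
      funext R β
      simp only [wpsi, wgt, mul_assoc]
    rw [hw]
    refine part2
      (a' := fun β => Real.cos β * (-δ₁) * Real.sin β ^ (-δ₁ - 1) * Real.cos β ^ (-δ₂) +
        Real.sin β ^ (-δ₁) * (-Real.sin β * (-δ₂) * Real.cos β ^ (-δ₂ - 1)))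
      (g := fun β => 2 * ((1-δ₁) * Real.cos β ^ 2 - (1-δ₂) * Real.sin β ^ 2)) hξ hξs
      ?_ ?_ ?_ ?_ (le_max_of_le_left (abs_nonneg _)) ?_
    · exact (ContDiffOn.rpow_const_of_ne Real.contDiff_sin.contDiffOn
        fun β hβ => (sin_pos' hβ).ne').mul
        (ContDiffOn.rpow_const_of_ne Real.contDiff_cos.contDiffOn
        fun β hβ => (cos_pos' hβ).ne')
    · exact fun β hβ => mul_nonneg (Real.rpow_nonneg (sin_pos' hβ).le _)
        (Real.rpow_nonneg (cos_pos' hβ).le _)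
    · intro β hβ
      exact ((Real.hasDerivAt_sin β).rpow_const (Or.inl (sin_pos' hβ).ne')).mul
        ((Real.hasDerivAt_cos β).rpow_const (Or.inl (cos_pos' hβ).ne'))
    · intro β hβ
      have h1 := sin_pos' hβ
      have h2 := cos_pos' hβ
      rw [Real.rpow_sub_one h1.ne', Real.rpow_sub_one h2.ne', Real.sin_two_mul, Real.cos_two_mul']
      field_simp
      ring
    · intro β hβ
      have h1 : 1 - δ₁ ≤ max |1-δ₁| |1-δ₂| := (le_abs_self _).trans (le_max_left _ _)
      have h2 : -(1 - δ₂) ≤ max |1-δ₁| |1-δ₂| := (neg_le_abs _).trans (le_max_right _ _)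
      have h3 := Real.sin_sq_add_cos_sq β
      generalize max |1-δ₁| |1-δ₂| = M at *
      have h4 := mul_le_mul_of_nonneg_right h1 (sq_nonneg (Real.cos β))
      have h5 := mul_le_mul_of_nonneg_right h2 (sq_nonneg (Real.sin β))
      have h6 : M * Real.sin β ^ 2 + M * Real.cos β ^ 2 = M := by
        rw [← mul_add, h3, mul_one]
      linarith

end Paper
end
end

section
/- There is an absolute constant C such that the following holds for every α ∈ (0, 1/1000]. For all twice continuously differentiable Ω, η with compact support contained in (0,∞)×(0,π/2): ⟨D_β L₁(Ω,η), (D_β Ω) φ₂⟩ + ⟨D_β L₂(Ω,η), (D_β η) φ₂⟩ ≤ −(1/5 − α) (‖(D_β Ω) φ₂^{1/2}‖₂² + ‖(D_β η) φ₂^{1/2}‖₂²) + C α (L₁₂(Ω)(0)² + ‖L̃₁₂(Ω)/R‖²_{L²(R)}). -/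
open Real MeasureTheory Set

noncomputable section

namespace Paper

lemma integrableOn_Q {f : ℝ × ℝ → ℝ} {K : Set (ℝ × ℝ)} (hK : IsCompact K) (hKQ : K ⊆ Qdom)
    (hc : ContinuousOn f Qdom) (h0 : ∀ p ∉ K, f p = 0) : IntegrableOn f Qdom :=
  ((hc.mono hKQ).integrableOn_compact hK).of_forall_sdiff_eq_zero isOpen_Qdom.measurableSet
    (fun x hx => h0 x hx.2)

lemma iterated_eq {f : ℝ → ℝ → ℝ} {F : ℝ × ℝ → ℝ} (hF : IntegrableOn F Qdom)
    (h : ∀ R β, (R, β) ∈ Qdom → f R β = F (R, β)) :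
    ∫ R in Set.Ioi (0:ℝ), ∫ β in Set.Ioo (0:ℝ) (Real.pi/2), f R β = ∫ p in Qdom, F p := by
  have : ∫ p in Qdom, F p = ∫ R in Set.Ioi (0:ℝ), ∫ β in Set.Ioo (0:ℝ) (Real.pi/2), F (R, β) :=
    setIntegral_prod F hF
  rw [this]
  refine setIntegral_congr_fun measurableSet_Ioi (fun R hR => ?_)
  exact setIntegral_congr_fun measurableSet_Ioo (fun β hβ => h R β ⟨hR, hβ⟩)

lemma fderiv_zero_off {G : ℝ × ℝ → ℝ} {K : Set (ℝ × ℝ)} (hK : IsCompact K)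
    (h0 : ∀ p ∉ K, G p = 0) : ∀ p ∉ K, fderiv ℝ G p = 0 := by
  intro p hp
  have : G =ᶠ[nhds p] fun _ => 0 := by
    filter_upwards [hK.isClosed.isOpen_compl.mem_nhds hp] with q hq using h0 q hq
  rw [this.fderiv_eq]; simp

lemma contDiff_ext {G : ℝ × ℝ → ℝ} {K : Set (ℝ × ℝ)} (hK : IsCompact K) (hKQ : K ⊆ Qdom)
    (hc : ContDiffOn ℝ 1 G Qdom) (h0 : ∀ p ∉ K, G p = 0) : ContDiff ℝ 1 G := by
  rw [contDiff_iff_contDiffAt]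
  intro p
  by_cases hp : p ∈ K
  · exact hc.contDiffAt (isOpen_Qdom.mem_nhds (hKQ hp))
  · have : G =ᶠ[nhds p] fun _ => 0 := by
      filter_upwards [hK.isClosed.isOpen_compl.mem_nhds hp] with q hq using h0 q hq
    exact contDiffAt_const.congr_of_eventuallyEq this

lemma cont_fderiv_apply {G : ℝ × ℝ → ℝ} (hG : ContDiff ℝ 1 G) (v : ℝ × ℝ) :
    Continuous (fun p => fderiv ℝ G p v) :=
  (hG.continuous_fderiv (by norm_num)).clm_apply continuous_const

lemma integral_fderiv_zero {G : ℝ × ℝ → ℝ} {K : Set (ℝ × ℝ)} (hK : IsCompact K) (hKQ : K ⊆ Qdom)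
    (hG : ContDiff ℝ 1 G) (h0 : ∀ p ∉ K, G p = 0) (v : ℝ × ℝ) :
    IntegrableOn (fun p => fderiv ℝ G p v) Qdom ∧ ∫ p in Qdom, fderiv ℝ G p v = 0 := by
  have hz : ∀ p ∉ K, fderiv ℝ G p v = 0 := fun p hp => by rw [fderiv_zero_off hK h0 p hp]; rfl
  have hcont := cont_fderiv_apply hG v
  refine ⟨integrableOn_Q hK hKQ hcont.continuousOn hz, ?_⟩
  rw [setIntegral_eq_integral_of_forall_compl_eq_zero (fun x hx => hz x (fun h => hx (hKQ h)))]
  have i1 : Integrable (fun p => fderiv ℝ G p v) :=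
    hcont.integrable_of_hasCompactSupport (HasCompactSupport.intro hK hz)
  have i2 : Integrable G :=
    hG.continuous.integrable_of_hasCompactSupport (HasCompactSupport.intro hK h0)
  have := integral_mul_fderiv_eq_neg_fderiv_mul_of_integrable (μ := (volume : Measure (ℝ × ℝ)))
    (f := fun _ : ℝ × ℝ => (1:ℝ)) (g := G) (v := v) (by simp) (by simpa using i1) (by simpa using i2)
    (fun x _ => by fun_prop) (fun x _ => (hG.differentiable (by norm_num)).differentiableAt)
  simpa using this

lemma hasDerivAt_fst_s2 {U : ℝ × ℝ → ℝ} {R β : ℝ} (hU : DifferentiableAt ℝ U (R, β)) :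
    HasDerivAt (fun r => U (r, β)) (fderiv ℝ U (R, β) (1, 0)) R :=
  hU.hasFDerivAt.comp_hasDerivAt R ((hasDerivAt_id R).prodMk (hasDerivAt_const R β))

lemma hasDerivAt_snd_s2 {U : ℝ × ℝ → ℝ} {R β : ℝ} (hU : DifferentiableAt ℝ U (R, β)) :
    HasDerivAt (fun b => U (R, b)) (fderiv ℝ U (R, β) (0, 1)) β :=
  hU.hasFDerivAt.comp_hasDerivAt β ((hasDerivAt_const β R).prodMk (hasDerivAt_id β))

/-- `D_β` of a function, uncurried. -/
def uu (F : ℝ → ℝ → ℝ) : ℝ × ℝ → ℝ :=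
  fun p => Real.sin (2 * p.2) * fderiv ℝ (Function.uncurry F) p (0, 1)

lemma uu_contDiff {F : ℝ → ℝ → ℝ} (hF : ContDiff ℝ 2 (Function.uncurry F)) :
    ContDiff ℝ 1 (uu F) := by
  have h1 : ContDiff ℝ 1 (fderiv ℝ (Function.uncurry F)) := hF.fderiv_right (by norm_num)
  have h2 : ContDiff ℝ 1 (fun p : ℝ × ℝ => fderiv ℝ (Function.uncurry F) p (0, 1)) :=
    h1.clm_apply contDiff_const
  unfold uu
  refine ContDiff.mul ?_ h2
  fun_prop

lemma uu_zero {F : ℝ → ℝ → ℝ} {K : Set (ℝ × ℝ)} (hK : IsCompact K)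
    (h0 : ∀ x y : ℝ, (x, y) ∉ K → F x y = 0) : ∀ p ∉ K, uu F p = 0 := by
  intro p hp
  unfold uu
  rw [fderiv_zero_off (G := Function.uncurry F) hK (fun p hp => h0 p.1 p.2 hp) p hp]
  simp

lemma Dbeta_eq {F : ℝ → ℝ → ℝ} (hF : ContDiff ℝ 2 (Function.uncurry F)) (R β : ℝ) :
    Dbeta F R β = uu F (R, β) := by
  unfold Dbeta uu
  have := hasDerivAt_snd_s2 (U := Function.uncurry F) (R := R) (β := β)
    ((hF.differentiable (by norm_num)).differentiableAt)
  have h2 : deriv (fun b => F R b) β = _ := this.deriv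
  rw [h2]

lemma DR_eq {F : ℝ → ℝ → ℝ} (hF : ContDiff ℝ 2 (Function.uncurry F)) (R β : ℝ) :
    DR F R β = R * fderiv ℝ (Function.uncurry F) (R, β) (1, 0) := by
  unfold DR
  have := hasDerivAt_fst_s2 (U := Function.uncurry F) (R := R) (β := β)
    ((hF.differentiable (by norm_num)).differentiableAt)
  have h2 : deriv (fun r => F r β) R = _ := this.deriv
  rw [h2]

lemma DR_hasDeriv {F : ℝ → ℝ → ℝ} (hF : ContDiff ℝ 2 (Function.uncurry F)) (R β : ℝ) :
    ∃ d, HasDerivAt (fun b => DR F R b) d β ∧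
      Real.sin (2*β) * d = R * fderiv ℝ (uu F) (R, β) (1, 0) := by
  have h1 : ContDiff ℝ 1 (fderiv ℝ (Function.uncurry F)) := hF.fderiv_right (by norm_num)
  have hd : DifferentiableAt ℝ (fderiv ℝ (Function.uncurry F)) (R, β) :=
    (h1.differentiable (by norm_num)).differentiableAt
  have e1 : HasDerivAt (fun b => fderiv ℝ (Function.uncurry F) (R, b))
      (fderiv ℝ (fderiv ℝ (Function.uncurry F)) (R, β) (0, 1)) β :=
    hd.hasFDerivAt.comp_hasDerivAt β ((hasDerivAt_const β R).prodMk (hasDerivAt_id β))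
  have e2 : HasDerivAt (fun r => fderiv ℝ (Function.uncurry F) (r, β))
      (fderiv ℝ (fderiv ℝ (Function.uncurry F)) (R, β) (1, 0)) R :=
    hd.hasFDerivAt.comp_hasDerivAt R ((hasDerivAt_id R).prodMk (hasDerivAt_const R β))
  have hs : IsSymmSndFDerivAt ℝ (Function.uncurry F) (R, β) :=
    hF.contDiffAt.isSymmSndFDerivAt (by simp)
  refine ⟨R * (fderiv ℝ (fderiv ℝ (Function.uncurry F)) (R, β) (0, 1)) (1, 0), ?_, ?_⟩
  · have : (fun b => DR F R b) = fun b => R * fderiv ℝ (Function.uncurry F) (R, b) (1, 0) := by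
      funext b; exact DR_eq hF R b
    rw [this]
    have := e1.clm_apply (hasDerivAt_const β ((1:ℝ), (0:ℝ)))
    simp only [map_zero, add_zero] at this
    exact this.const_mul R
  · have a1 := hasDerivAt_fst_s2 (U := uu F) (R := R) (β := β)
      (((uu_contDiff hF).differentiable (by norm_num)).differentiableAt)
    have a2 := e2.clm_apply (hasDerivAt_const R ((0:ℝ), (1:ℝ)))
    simp only [map_zero, add_zero] at a2
    have a3 := a1.unique (a2.const_mul (Real.sin (2*β)))
    rw [a3, hs.eq (0,1) (1,0)]
    ring

lemma tL12_facts {Ω : ℝ → ℝ → ℝ} (hΩ : ContDiff ℝ 2 (Function.uncurry Ω)) {K : Set (ℝ × ℝ)}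
    (hK : IsCompact K) (hKQ : K ⊆ Qdom) (h0 : ∀ x y : ℝ, (x, y) ∉ K → Ω x y = 0) :
    ContinuousOn (tL12 Ω) (Ioi 0) ∧ IntegrableOn (fun R => (tL12 Ω R / R)^2) (Ioi 0) := by
  set g : ℝ → ℝ := fun s => ∫ β in Set.Ioo (0:ℝ) (Real.pi/2), Ω s β * Real.sin (2*β) / s with hg
  have hint : IntegrableOn (fun p : ℝ × ℝ => Ω p.1 p.2 * Real.sin (2*p.2) / p.1) Qdom := by
    refine integrableOn_Q hK hKQ ?_ ?_
    · have : Continuous (fun p : ℝ × ℝ => Ω p.1 p.2) := hΩ.continuous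
      refine ContinuousOn.div (by fun_prop) (by fun_prop) ?_
      intro p hp; exact (ne_of_gt hp.1)
    · intro p hp; simp [h0 p.1 p.2 hp]
  have hgi : IntegrableOn g (Ioi 0) := by
    have h : Integrable (fun p : ℝ × ℝ => Ω p.1 p.2 * Real.sin (2*p.2) / p.1)
        ((volume.restrict (Ioi (0:ℝ))).prod (volume.restrict (Ioo (0:ℝ) (Real.pi/2)))) := by
      rw [Measure.prod_restrict]; exact hint
    exact h.integral_prod_left
  -- support bounded away from 0
  obtain ⟨a, ha, hga⟩ : ∃ a > 0, ∀ s ≤ a, g s = 0 := by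
    have : ∃ a > 0, ∀ p ∈ K, a < p.1 := by
      rcases K.eq_empty_or_nonempty with h | h
      · exact ⟨1, one_pos, by simp [h]⟩
      · obtain ⟨q, hq, hmin⟩ := hK.exists_isMinOn h (continuous_fst.continuousOn)
        have hq0 : 0 < q.1 := (hKQ hq).1
        exact ⟨q.1/2, by positivity, fun p hp => by have := hmin hp; simp at this; linarith⟩
    obtain ⟨a, ha, h⟩ := this
    refine ⟨a, ha, fun s hs => ?_⟩
    have : ∀ β, Ω s β = 0 := fun β => h0 s β (fun hk => by have := h _ hk; simp at this; linarith)
    simp [hg, this]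
  have hgi' : Integrable g := by
    rw [← integrableOn_univ]
    refine hgi.of_forall_sdiff_eq_zero MeasurableSet.univ (fun x hx => hga x ?_)
    have : x ≤ 0 := by simpa using hx.2
    linarith
  have hT : ∀ R, 0 < R → tL12 Ω R = - ∫ s in (0:ℝ)..R, g s := by
    intro R hR
    have := intervalIntegral.integral_interval_add_Ioi (a := (0:ℝ)) (b := R) (f := g)
      hgi hgi'.integrableOn
    have e1 : L12 Ω R = ∫ s in Ioi R, g s := rfl
    have e2 : L12 Ω 0 = ∫ s in Ioi 0, g s := rfl
    unfold tL12
    rw [e1, e2, ← this]; ring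
  have hcont : ContinuousOn (tL12 Ω) (Ioi 0) := by
    have : Continuous fun R => - ∫ s in (0:ℝ)..R, g s :=
      (intervalIntegral.continuous_primitive (fun a b => hgi'.intervalIntegrable) 0).neg
    exact this.continuousOn.congr (fun R hR => hT R hR)
  refine ⟨hcont, ?_⟩
  have hz : ∀ R, 0 < R → R ≤ a → tL12 Ω R = 0 := by
    intro R hR hRa
    rw [hT R hR, intervalIntegral.integral_congr (g := fun _ => (0:ℝ))]
    · simp
    · intro s hs
      rw [uIcc_of_le hR.le] at hs
      exact hga s (hs.2.trans hRa)
  have hb : ∀ R, 0 < R → |tL12 Ω R| ≤ ∫ s, |g s| := by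
    intro R hR
    rw [hT R hR, abs_neg]
    have h1 := intervalIntegral.norm_integral_le_integral_norm (f := g) (μ := volume) hR.le
    simp only [Real.norm_eq_abs] at h1
    refine h1.trans ?_
    rw [intervalIntegral.integral_of_le hR.le]
    exact setIntegral_le_integral hgi'.abs (Filter.Eventually.of_forall fun _ => abs_nonneg _)
  set M := ∫ s, |g s| with hM
  have hia : IntegrableOn (fun R => (tL12 Ω R / R)^2) (Ioi a) := by
    have hr : IntegrableOn (fun R : ℝ => M^2 * R ^ (-2:ℝ)) (Ioi a) :=
      (integrableOn_Ioi_rpow_of_lt (by norm_num) ha).const_mul _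
    refine Integrable.mono' hr ?_ ?_
    · refine ContinuousOn.aestronglyMeasurable ?_ measurableSet_Ioi
      refine ContinuousOn.pow (ContinuousOn.div (hcont.mono (Ioi_subset_Ioi ha.le))
        continuousOn_id ?_) 2
      intro x hx; have : a < x := hx
      exact (ne_of_gt (ha.trans this))
    · refine (ae_restrict_iff' measurableSet_Ioi).2 (Filter.Eventually.of_forall fun R hR => ?_)
      have hR0 : 0 < R := ha.trans hR
      rw [Real.norm_eq_abs, abs_of_nonneg (sq_nonneg _), Real.rpow_neg hR0.le, div_pow]
      rw [div_eq_mul_inv]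
      have e : R ^ (2:ℝ) = R^2 := by norm_cast
      rw [e]
      have : (tL12 Ω R)^2 ≤ M^2 := by
        rw [← sq_abs]; exact pow_le_pow_left₀ (abs_nonneg _) (hb R hR0) 2
      gcongr
  refine hia.of_forall_sdiff_eq_zero measurableSet_Ioi (fun R hR => ?_)
  have h1 : 0 < R := hR.1
  have h2 : R ≤ a := by simpa using hR.2
  simp [hz R h1 h2]

lemma angle_facts {β : ℝ} (h : β ∈ Ioo (0:ℝ) (Real.pi/2)) :
    0 < Real.sin β ∧ 0 < Real.cos β ∧ 0 < Real.sin (2*β) := by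
  have h1 : 0 < Real.sin β := Real.sin_pos_of_pos_of_lt_pi h.1 (by linarith [h.2, Real.pi_pos])
  have h2 : 0 < Real.cos β := Real.cos_pos_of_mem_Ioo ⟨by linarith [h.1, Real.pi_pos], h.2⟩
  refine ⟨h1, h2, ?_⟩
  rw [Real.sin_two_mul]; positivity

/-- `D_β Γ`. -/
def dG (α β : ℝ) : ℝ := -2*α*(Real.sin β)^2 * Real.cos β ^ α

/-- The angular weight. -/
def ww (α β : ℝ) : ℝ := Real.sin (2*β) ^ (-(1 + α/10))

lemma Γ_hasDeriv (α : ℝ) {β : ℝ} (h : β ∈ Ioo (0:ℝ) (Real.pi/2)) :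
    ∃ d, HasDerivAt (Γf α) d β ∧ Real.sin (2*β) * d = dG α β := by
  obtain ⟨h1, h2, h3⟩ := angle_facts h
  refine ⟨_, (Real.hasDerivAt_cos β).rpow_const (p := α) (Or.inl h2.ne'), ?_⟩
  unfold dG
  rw [Real.rpow_sub_one h2.ne', Real.sin_two_mul]
  field_simp

lemma ww_hasDeriv (α : ℝ) {β : ℝ} (h : β ∈ Ioo (0:ℝ) (Real.pi/2)) :
    ∃ d, HasDerivAt (ww α) d β ∧
      Real.sin (2*β) * d = -(1+α/10) * 2 * Real.cos (2*β) * ww α β := by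
  obtain ⟨h1, h2, h3⟩ := angle_facts h
  have e : HasDerivAt (fun b : ℝ => Real.sin (2*b)) (Real.cos (2*β) * 2) β := by
    exact ((Real.hasDerivAt_sin (2*β)).comp β ((hasDerivAt_id β).const_mul 2)).congr_deriv (by simp)
  refine ⟨_, e.rpow_const (p := -(1+α/10)) (Or.inl h3.ne'), ?_⟩
  unfold ww
  rw [Real.rpow_sub_one h3.ne']
  field_simp

lemma ww_pos (α : ℝ) {β : ℝ} (h : β ∈ Ioo (0:ℝ) (Real.pi/2)) : 0 < ww α β :=
  Real.rpow_pos_of_pos (angle_facts h).2.2 _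

lemma ww_contDiffOn (α : ℝ) : ContDiffOn ℝ 1 (fun p : ℝ × ℝ => ww α p.2) Qdom := by
  unfold ww
  refine ContDiffOn.rpow_const_of_ne (by fun_prop) ?_
  intro p hp; exact (angle_facts hp.2).2.2.ne'

lemma Theta_bound {α β : ℝ} (h0 : 0 < α) (h1 : α ≤ 1/1000) (h : β ∈ Ioo (0:ℝ) (Real.pi/2)) :
    (dG α β)^2 * ww α β ≤ 4*α^2 * (Real.sin β * Real.cos β ^ (19/10*α - 1)) := by
  obtain ⟨hs, hc, hsc⟩ := angle_facts h
  have hs1 := Real.sin_le_one β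
  have e1 : ww α β = (2:ℝ) ^ (-(1+α/10)) * Real.sin β ^ (-(1+α/10)) * Real.cos β ^ (-(1+α/10)) := by
    unfold ww
    rw [Real.sin_two_mul, Real.mul_rpow (by positivity) hc.le, Real.mul_rpow (by norm_num) hs.le]
  have e2 : (2:ℝ) ^ (-(1+α/10)) ≤ 1 := Real.rpow_le_one_of_one_le_of_nonpos (by norm_num) (by linarith)
  have e3 : (Real.cos β ^ α)^2 * Real.cos β ^ (-(1+α/10)) = Real.cos β ^ (19/10*α - 1) := by
    rw [pow_two, ← Real.rpow_add hc, ← Real.rpow_add hc]; congr 1; ring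
  have e4 : (Real.sin β)^4 * Real.sin β ^ (-(1+α/10)) ≤ Real.sin β := by
    have : (Real.sin β)^4 = Real.sin β ^ (4:ℝ) := by norm_cast
    rw [this, ← Real.rpow_add hs]
    calc _ ≤ Real.sin β ^ (1:ℝ) := Real.rpow_le_rpow_of_exponent_ge hs hs1 (by linarith)
      _ = _ := Real.rpow_one _
  have : (dG α β)^2 * ww α β = 4*α^2 * ((2:ℝ) ^ (-(1+α/10)) *
      (((Real.sin β)^4 * Real.sin β ^ (-(1+α/10))) *
      ((Real.cos β ^ α)^2 * Real.cos β ^ (-(1+α/10))))) := by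
    rw [e1]; unfold dG; ring
  rw [this, e3]
  have p1 : 0 < Real.cos β ^ (19/10*α - 1) := Real.rpow_pos_of_pos hc _
  have p2 : 0 < (Real.sin β)^4 * Real.sin β ^ (-(1+α/10)) := by positivity
  have : (Real.sin β)^4 * Real.sin β ^ (-(1+α/10)) * Real.cos β ^ (19/10*α - 1)
      ≤ Real.sin β * Real.cos β ^ (19/10*α - 1) := mul_le_mul_of_nonneg_right e4 p1.le
  refine mul_le_mul_of_nonneg_left ?_ (by positivity)
  calc _ ≤ 1 * ((Real.sin β)^4 * Real.sin β ^ (-(1+α/10)) * Real.cos β ^ (19/10*α - 1)) :=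
        mul_le_mul_of_nonneg_right e2 (by positivity)
    _ ≤ _ := by rw [one_mul]; exact this

lemma model_int {α : ℝ} (h0 : 0 < α) :
    IntegrableOn (fun β => 4*α^2 * (Real.sin β * Real.cos β ^ (19/10*α - 1)))
      (Ioo (0:ℝ) (Real.pi/2)) ∧
    ∫ β in Ioo (0:ℝ) (Real.pi/2), 4*α^2 * (Real.sin β * Real.cos β ^ (19/10*α - 1)) ≤ 3*α := by
  set G : ℝ → ℝ := fun β => -(40/19*α) * Real.cos β ^ (19/10*α) with hG
  have hp := Real.pi_pos
  have hc : ContinuousOn G (Icc 0 (Real.pi/2)) := by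
    refine Continuous.continuousOn ?_
    exact continuous_const.mul (Real.continuous_cos.rpow_const (fun x => Or.inr (by positivity)))
  have hd : ∀ x ∈ Ioo 0 (Real.pi/2), HasDerivAt G
      (4*α^2 * (Real.sin x * Real.cos x ^ (19/10*α - 1))) x := by
    intro x hx
    have := ((Real.hasDerivAt_cos x).rpow_const (p := 19/10*α)
      (Or.inl (angle_facts hx).2.1.ne')).const_mul (-(40/19*α))
    exact this.congr_deriv (by ring)
  have hpos : ∀ x ∈ Ioo 0 (Real.pi/2), 0 ≤ 4*α^2 * (Real.sin x * Real.cos x ^ (19/10*α - 1)) := by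
    intro x hx
    obtain ⟨hs, hc, hsc⟩ := angle_facts hx
    positivity
  have hi := intervalIntegral.integrableOn_deriv_of_nonneg hc hd hpos
  refine ⟨hi.mono_set Ioo_subset_Ioc_self, ?_⟩
  have := intervalIntegral.integral_eq_sub_of_hasDerivAt_of_le (by positivity) hc hd
    ((intervalIntegrable_iff_integrableOn_Ioc_of_le (by positivity)).2 hi)
  rw [intervalIntegral.integral_of_le (by positivity), integral_Ioc_eq_integral_Ioo] at this
  rw [this, hG]
  simp only [Real.cos_pi_div_two, Real.cos_zero, Real.one_rpow]
  rw [Real.zero_rpow (by positivity)]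
  linarith

lemma Theta_int {α : ℝ} (h0 : 0 < α) (h1 : α ≤ 1/1000) :
    IntegrableOn (fun β => (dG α β)^2 * ww α β) (Ioo (0:ℝ) (Real.pi/2)) ∧
    ∫ β in Ioo (0:ℝ) (Real.pi/2), (dG α β)^2 * ww α β ≤ 3*α := by
  obtain ⟨i1, i2⟩ := model_int h0
  have i3 : IntegrableOn (fun β => (dG α β)^2 * ww α β) (Ioo (0:ℝ) (Real.pi/2)) := by
    refine Integrable.mono' i1 ?_ ?_
    · refine ContinuousOn.aestronglyMeasurable ?_ measurableSet_Ioo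
      unfold dG ww
      refine ContinuousOn.mul (ContinuousOn.pow (ContinuousOn.mul (by fun_prop) ?_) 2) ?_
      · exact ContinuousOn.rpow_const (by fun_prop) (fun x hx => Or.inl (angle_facts hx).2.1.ne')
      · exact ContinuousOn.rpow_const (by fun_prop) (fun x hx => Or.inl (angle_facts hx).2.2.ne')
    · refine (ae_restrict_iff' measurableSet_Ioo).2 (Filter.Eventually.of_forall fun β hβ => ?_)
      have := ww_pos α hβ
      rw [Real.norm_eq_abs, abs_of_nonneg (by positivity)]
      exact Theta_bound h0 h1 hβ
  exact ⟨i3, (setIntegral_mono_on i3 i1 measurableSet_Ioo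
    (fun β hβ => Theta_bound h0 h1 hβ)).trans i2⟩

lemma rad_int : IntegrableOn (fun R : ℝ => 1/(1+R)^2) (Ioi 0) ∧
    ∫ R in Ioi (0:ℝ), 1/(1+R)^2 = 1 := by
  have hd : ∀ x ∈ Ici (0:ℝ), HasDerivAt (fun R : ℝ => -(1+R)⁻¹) (1/(1+x)^2) x := by
    intro x hx
    have hx : (0:ℝ) ≤ x := hx
    have := (((hasDerivAt_id x).const_add 1).inv (by simp; positivity)).neg
    exact this.congr_deriv (by simp [neg_div])
  have hp : ∀ x ∈ Ioi (0:ℝ), 0 ≤ 1/(1+x)^2 := fun x _ => by positivity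
  have ht : Filter.Tendsto (fun R : ℝ => -(1+R)⁻¹) Filter.atTop (nhds 0) := by
    have := (tendsto_inv_atTop_zero.comp
      (Filter.tendsto_atTop_add_const_left Filter.atTop (1:ℝ) Filter.tendsto_id)).neg
    simpa using this
  refine ⟨integrableOn_Ioi_deriv_of_nonneg' hd hp ht, ?_⟩
  rw [integral_Ioi_of_hasDerivAt_of_nonneg' hd hp ht]; norm_num

lemma cst_bound {α : ℝ} (h0 : 0 < α) (h1 : α ≤ 1/1000) :
    4/(3*Real.pi) ≤ cst α := by
  have hp := Real.pi_pos
  have key : 2/3 ≤ ∫ β in Set.Ioo (0:ℝ) (Real.pi/2), Γf α β * Real.sin (2*β) := by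
    have hd : ∀ x ∈ uIcc 0 (Real.pi/2), HasDerivAt (fun b => -(2/3) * Real.cos b ^ 3)
        (Real.cos x * Real.sin (2*x)) x := by
      intro x hx
      have := ((Real.hasDerivAt_cos x).pow 3).const_mul (-(2/3))
      exact this.congr_deriv (by rw [Real.sin_two_mul]; push_cast; ring)
    have hc : Continuous fun x => Real.cos x * Real.sin (2*x) := by fun_prop
    have e := intervalIntegral.integral_eq_sub_of_hasDerivAt hd (hc.intervalIntegrable _ _)
    rw [intervalIntegral.integral_of_le (by positivity), integral_Ioc_eq_integral_Ioo] at e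
    have e' : ∫ t in Ioo 0 (Real.pi/2), Real.cos t * Real.sin (2*t) = 2/3 := by
      rw [e]; simp
    rw [← e']
    have hc2 : Continuous fun x => Γf α x * Real.sin (2*x) := by
      unfold Γf
      exact (Real.continuous_cos.rpow_const (fun x => Or.inr h0.le)).mul (by fun_prop)
    refine setIntegral_mono_on (hc.integrableOn_Icc.mono_set Ioo_subset_Icc_self)
      (hc2.integrableOn_Icc.mono_set Ioo_subset_Icc_self) measurableSet_Ioo (fun x hx => ?_)
    obtain ⟨hs, hc, hsc⟩ := angle_facts hx
    refine mul_le_mul_of_nonneg_right ?_ hsc.le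
    calc Real.cos x = Real.cos x ^ (1:ℝ) := (Real.rpow_one _).symm
      _ ≤ _ := Real.rpow_le_rpow_of_exponent_ge hc (Real.cos_le_one x) (by linarith)
  unfold cst
  calc 4/(3*Real.pi) = 2/Real.pi * (2/3) := by field_simp; norm_num
    _ ≤ _ := mul_le_mul_of_nonneg_left key (by positivity)

/-- Forcing term in the first equation. -/
def AA (α : ℝ) (Ω : ℝ → ℝ → ℝ) (p : ℝ × ℝ) : ℝ :=
  (2/(Real.pi * cst α)) * dG α p.2 * (-(L12 Ω 0) * (6*p.1^2/(1+p.1)^3))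

/-- Forcing term in the second equation. -/
def BB (α : ℝ) (Ω : ℝ → ℝ → ℝ) (p : ℝ × ℝ) : ℝ :=
  (2/(Real.pi * cst α)) * dG α p.2 *
    (tL12 Ω p.1 * (6*p.1/(1+p.1)^3) - L12 Ω 0 * (18*p.1^2/(1+p.1)^4))

lemma Ωbar_sub (α : ℝ) {R : ℝ} (hR : 0 < R) (b : ℝ) :
    Ωbar α R b - DR (Ωbar α) R b = (α / cst α) * Γf α b * (6*R^2/(1+R)^3) := by
  have hd : HasDerivAt (fun r => Ωbar α r b)
      ((α / cst α) * Γf α b * ((3*(1+R)^2 - 3*R*(2*(1+R)))/((1+R)^2)^2)) R := by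
    unfold Ωbar
    refine HasDerivAt.const_mul _ ?_
    have h1 : HasDerivAt (fun r : ℝ => 3*r) 3 R := by simpa using (hasDerivAt_id R).const_mul 3
    have h2 : HasDerivAt (fun r : ℝ => (1+r)^2) (2*(1+R)) R :=
      (((hasDerivAt_id R).const_add 1).pow 2).congr_deriv (by simp)
    exact h1.div h2 (by positivity)
  unfold DR
  rw [hd.deriv]; unfold Ωbar
  field_simp
  ring

lemma ηbar_sub (α : ℝ) {R : ℝ} (hR : 0 < R) (b : ℝ) :
    ηbar α R b - DR (ηbar α) R b = (α / cst α) * Γf α b * (18*R^2/(1+R)^4) := by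
  have hd : HasDerivAt (fun r => ηbar α r b)
      ((α / cst α) * Γf α b * ((6*(1+R)^3 - 6*R*(3*(1+R)^2))/((1+R)^3)^2)) R := by
    unfold ηbar
    refine HasDerivAt.const_mul _ ?_
    have h1 : HasDerivAt (fun r : ℝ => 6*r) 6 R := by simpa using (hasDerivAt_id R).const_mul 6
    have h2 : HasDerivAt (fun r : ℝ => (1+r)^3) (3*(1+R)^2) R :=
      (((hasDerivAt_id R).const_add 1).pow 3).congr_deriv (by simp)
    exact h1.div h2 (by positivity)
  unfold DR
  rw [hd.deriv]; unfold ηbar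
  field_simp
  ring

lemma Dbeta_hasDeriv {F : ℝ → ℝ → ℝ} (hF : ContDiff ℝ 2 (Function.uncurry F)) (R β : ℝ) :
    HasDerivAt (fun b => Dbeta F R b) (fderiv ℝ (uu F) (R, β) (0, 1)) β := by
  have : (fun b => Dbeta F R b) = fun b => uu F (R, b) := by
    funext b; exact Dbeta_eq hF R b
  rw [this]
  exact hasDerivAt_snd_s2 ((uu_contDiff hF).differentiable (by norm_num)).differentiableAt

lemma self_hasDeriv {F : ℝ → ℝ → ℝ} (hF : ContDiff ℝ 2 (Function.uncurry F)) (R β : ℝ) :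
    HasDerivAt (fun b => F R b) (fderiv ℝ (Function.uncurry F) (R, β) (0, 1)) β :=
  hasDerivAt_snd_s2 (U := Function.uncurry F) (hF.differentiable (by norm_num)).differentiableAt

lemma Dbeta_opL1 {α : ℝ} (hα : 0 < α) {Ω η : ℝ → ℝ → ℝ}
    (hΩ : ContDiff ℝ 2 (Function.uncurry Ω)) (hη : ContDiff ℝ 2 (Function.uncurry η))
    {R β : ℝ} (h : (R, β) ∈ Qdom) :
    Dbeta (opL1 α Ω η) R β = - (R * fderiv ℝ (uu Ω) (R, β) (1, 0))
      - (3/(1+R)) * (Real.sin (2*β) * fderiv ℝ (uu Ω) (R, β) (0, 1))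
      - uu Ω (R, β) + uu η (R, β) + AA α Ω (R, β) := by
  obtain ⟨d1, hd1, e1⟩ := DR_hasDeriv hΩ R β
  obtain ⟨d2, hd2, e2⟩ := Γ_hasDeriv α h.2
  have hR : 0 < R := h.1
  have hfun : (fun b => opL1 α Ω η R b) = fun b => - DR Ω R b - (3/(1+R)) * Dbeta Ω R b - Ω R b
      + η R b + cω α Ω * ((α / cst α) * Γf α b * (6*R^2/(1+R)^3)) := by
    funext b
    unfold opL1
    rw [Ωbar_sub α hR b]
  have hd := ((((hd1.neg).sub ((Dbeta_hasDeriv hΩ R β).const_mul (3/(1+R)))).sub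
    (self_hasDeriv hΩ R β)).add (self_hasDeriv hη R β)).add
    (((hd2.const_mul (α / cst α)).mul_const (6*R^2/(1+R)^3)).const_mul (cω α Ω))
  have hd' := (hd.congr_of_eventuallyEq (f₁ := fun b => opL1 α Ω η R b)
    (Filter.Eventually.of_forall fun b => congrFun hfun b)).deriv
  have uΩ : uu Ω (R, β) = Real.sin (2*β) * fderiv ℝ (Function.uncurry Ω) (R, β) (0, 1) := rfl
  have uη : uu η (R, β) = Real.sin (2*β) * fderiv ℝ (Function.uncurry η) (R, β) (0, 1) := rfl
  unfold Dbeta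
  rw [hd']
  unfold AA cω
  simp only
  rw [← e2]
  have e3 : Real.sin (2*β) * (-(2/(Real.pi*α)) * L12 Ω 0 * (α / cst α * d2 * (6*R^2/(1+R)^3)))
    = 2/(Real.pi * cst α) * (Real.sin (2*β) * d2) * (-(L12 Ω 0) * (6*R^2/(1+R)^3)) := by
    have : (2/(Real.pi*α)) * (α / cst α) = 2/(Real.pi * cst α) := by
      have := Real.pi_pos
      field_simp
    rw [← this]; ring
  rw [uΩ, uη, ← e1, ← e3]
  ring

lemma Dbeta_opL2 {α : ℝ} (hα : 0 < α) {Ω η : ℝ → ℝ → ℝ}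
    (hη : ContDiff ℝ 2 (Function.uncurry η))
    {R β : ℝ} (h : (R, β) ∈ Qdom) :
    Dbeta (opL2 α Ω η) R β = - (R * fderiv ℝ (uu η) (R, β) (1, 0))
      - (3/(1+R)) * (Real.sin (2*β) * fderiv ℝ (uu η) (R, β) (0, 1))
      + (-2 + 3/(1+R)) * uu η (R, β) + BB α Ω (R, β) := by
  obtain ⟨d1, hd1, e1⟩ := DR_hasDeriv hη R β
  obtain ⟨d2, hd2, e2⟩ := Γ_hasDeriv α h.2
  have hR : 0 < R := h.1
  have hfun : (fun b => opL2 α Ω η R b) = fun b => - DR η R b - (3/(1+R)) * Dbeta η R b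
      + (-2 + 3/(1+R)) * η R b
      + (2/(Real.pi*α)) * tL12 Ω R * ((α / cst α) * Γf α b * (6*R/(1+R)^3))
      + cω α Ω * ((α / cst α) * Γf α b * (18*R^2/(1+R)^4)) := by
    funext b
    unfold opL2
    rw [ηbar_sub α hR b]
    rfl
  have hd := ((((hd1.neg).sub ((Dbeta_hasDeriv hη R β).const_mul (3/(1+R)))).add
    ((self_hasDeriv hη R β).const_mul (-2 + 3/(1+R)))).add
    (((hd2.const_mul (α / cst α)).mul_const (6*R/(1+R)^3)).const_mul
      ((2/(Real.pi*α)) * tL12 Ω R))).add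
    (((hd2.const_mul (α / cst α)).mul_const (18*R^2/(1+R)^4)).const_mul (cω α Ω))
  have hd' := (hd.congr_of_eventuallyEq (f₁ := fun b => opL2 α Ω η R b)
    (Filter.Eventually.of_forall fun b => congrFun hfun b)).deriv
  have uΩ : uu Ω (R, β) = Real.sin (2*β) * fderiv ℝ (Function.uncurry Ω) (R, β) (0, 1) := rfl
  have uη : uu η (R, β) = Real.sin (2*β) * fderiv ℝ (Function.uncurry η) (R, β) (0, 1) := rfl
  unfold Dbeta
  rw [hd']
  unfold BB cω
  simp only
  rw [← e2]
  have e3 : 2/(Real.pi * cst α) * (Real.sin (2*β) * d2) *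
      (tL12 Ω R * (6*R/(1+R)^3) - L12 Ω 0 * (18*R^2/(1+R)^4)) =
      Real.sin (2*β) * ((2/(Real.pi*α)) * tL12 Ω R * (α / cst α * d2 * (6*R/(1+R)^3)))
      + Real.sin (2*β) * (-(2/(Real.pi*α)) * L12 Ω 0 * (α / cst α * d2 * (18*R^2/(1+R)^4))) := by
    have : (2/(Real.pi*α)) * (α / cst α) = 2/(Real.pi * cst α) := by
      have := Real.pi_pos
      field_simp
    rw [← this]; ring
  rw [uη, ← e1, e3]
  ring

lemma quad_bound {α s c u v A B : ℝ} (h0 : 0 < α) (hs0 : 0 ≤ s) (hs1 : s ≤ 1)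
    (hc : -1 ≤ c) :
    (1/2-2*s)*(u^2+v^2) - (3*α/10)*s*c*(u^2+v^2) - u^2 + u*v + (-2+3*s)*v^2 + A*u + B*v
      ≤ -(1/5-α)*(u^2+v^2) + 5*(A^2+B^2) := by
  have k1 : 0 ≤ s * ((v/2-u)^2 + 5/4*u^2) := by positivity
  have k2 : 0 ≤ (1-s) * ((u/2-v)^2 + 1/4*v^2) := mul_nonneg (by linarith) (by positivity)
  have k3 : 0 ≤ 5*(A-u/10)^2 + 5*(B-v/10)^2 := by positivity
  have k4 : -(3*α/10)*s*c ≤ α := by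
    have : 0 ≤ α*s := by positivity
    have : 0 ≤ (α*s)*(1+c) := mul_nonneg this (by linarith)
    nlinarith
  have k5 : -(3*α/10)*s*c*(u^2+v^2) ≤ α*(u^2+v^2) := mul_le_mul_of_nonneg_right k4 (by positivity)
  nlinarith

/-- Radial weight. -/
def rho (R : ℝ) : ℝ := (1+R)^4/R^4

lemma forcing_bound {α : ℝ} (h0 : 0 < α) (h1 : α ≤ 1/1000) (Ω : ℝ → ℝ → ℝ)
    {R β : ℝ} (h : (R, β) ∈ Qdom) :
    rho R * ww α β * (5 * ((AA α Ω (R, β))^2 + (BB α Ω (R, β))^2)) ≤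
      (7695 * (L12 Ω 0)^2 * (1/(1+R)^2) + 810 * (tL12 Ω R / R)^2) * ((dG α β)^2 * ww α β) := by
  have hR : 0 < R := h.1
  have hw := ww_pos α h.2
  have hp := Real.pi_pos
  have hc := cst_bound h0 h1
  have hcp : 0 < cst α := lt_of_lt_of_le (by positivity) hc
  have hk0 : 0 ≤ 2/(Real.pi * cst α) := by positivity
  have hk : 2/(Real.pi * cst α) ≤ 3/2 := by
    rw [div_le_iff₀ (by positivity)]
    rw [div_le_iff₀ (by positivity)] at hc
    nlinarith
  unfold AA BB
  simp only
  set k := 2/(Real.pi * cst α)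
  set L := L12 Ω 0
  set T := tL12 Ω R
  set d := dG α β
  set w := ww α β
  have hk2 : k^2 ≤ 9/4 := by nlinarith
  have r1 : rho R * (6*R^2/(1+R)^3)^2 = 36*(1/(1+R)^2) := by
    unfold rho; field_simp; norm_num
  have r2 : rho R * (6*R/(1+R)^3)^2 = 36 * (1/R^2) * (1/(1+R)^2) := by
    unfold rho; field_simp; norm_num
  have r3 : rho R * (18*R^2/(1+R)^4)^2 = 324*(1/(1+R)^2)*(1/(1+R)^2) := by
    unfold rho; field_simp; norm_num
  have q1 : 1/(1+R)^2 ≤ 1 := by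
    rw [div_le_one (by positivity)]; nlinarith
  have q0 : 0 < 1/(1+R)^2 := by positivity
  have q2 : 0 < 1/R^2 := by positivity
  have hrho : 0 < rho R := by unfold rho; positivity
  set a := 6*R^2/(1+R)^3
  set b1 := 6*R/(1+R)^3
  set b2 := 18*R^2/(1+R)^4
  set q := 1/(1+R)^2
  have t1 : (T/R)^2 = T^2 * (1/R^2) := by rw [div_pow]; ring
  rw [t1]
  set z := 1/R^2
  have s1 : rho R * ((-L*a)^2 + (T*b1-L*b2)^2) ≤ 684*L^2*q + 72*(T^2*z) := by
    have m1 : (T*b1-L*b2)^2 ≤ 2*(T^2*b1^2 + L^2*b2^2) := by nlinarith [sq_nonneg (T*b1+L*b2)]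
    calc rho R * ((-L*a)^2 + (T*b1-L*b2)^2)
        ≤ rho R * (L^2*a^2 + 2*(T^2*b1^2 + L^2*b2^2)) := by
          refine mul_le_mul_of_nonneg_left ?_ hrho.le
          nlinarith
      _ = L^2*(rho R*a^2) + 2*(T^2*(rho R*b1^2) + L^2*(rho R*b2^2)) := by ring
      _ = 36*(L^2*q) + 72*(T^2*z)*q + 648*(L^2*q)*q := by rw [r1, r2, r3]; ring
      _ ≤ _ := by
          have n1 : 0 ≤ T^2*z := by positivity
          have n2 : 0 ≤ L^2*q := by positivity
          nlinarith
  have s2 : 0 ≤ 684*L^2*q + 72*(T^2*z) := by positivity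
  calc _ = 5*k^2*(d^2*w)*(rho R * ((-L*a)^2 + (T*b1-L*b2)^2)) := by ring
    _ ≤ 5*k^2*(d^2*w)*(684*L^2*q + 72*(T^2*z)) := mul_le_mul_of_nonneg_left s1 (by positivity)
    _ = k^2 * (5*(d^2*w)*(684*L^2*q + 72*(T^2*z))) := by ring
    _ ≤ 9/4 * (5*(d^2*w)*(684*L^2*q + 72*(T^2*z))) :=
        mul_le_mul_of_nonneg_right hk2 (by positivity)
    _ = _ := by ring

/-- Radial flux. -/
def G1 (α : ℝ) (u v : ℝ × ℝ → ℝ) (p : ℝ × ℝ) : ℝ :=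
  -(1/2) * ((1+p.1)^4/p.1^3) * ww α p.2 * (u p ^ 2 + v p ^ 2)

/-- Angular flux. -/
def G2 (α : ℝ) (u v : ℝ × ℝ → ℝ) (p : ℝ × ℝ) : ℝ :=
  -(3/2) * ((1+p.1)^3/p.1^4) * (Real.sin (2*p.2) * ww α p.2) * (u p ^ 2 + v p ^ 2)

lemma G1_contDiffOn (α : ℝ) {u v : ℝ × ℝ → ℝ} (hu : ContDiff ℝ 1 u) (hv : ContDiff ℝ 1 v) :
    ContDiffOn ℝ 1 (G1 α u v) Qdom := by
  unfold G1
  refine ContDiffOn.mul (ContDiffOn.mul (ContDiffOn.mul contDiffOn_const ?_) (ww_contDiffOn α)) ?_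
  · refine ContDiffOn.div (by fun_prop) (by fun_prop) ?_
    intro p hp; have : 0 < p.1 := hp.1; positivity
  · exact ((hu.pow 2).add (hv.pow 2)).contDiffOn

lemma G2_contDiffOn (α : ℝ) {u v : ℝ × ℝ → ℝ} (hu : ContDiff ℝ 1 u) (hv : ContDiff ℝ 1 v) :
    ContDiffOn ℝ 1 (G2 α u v) Qdom := by
  unfold G2
  refine ContDiffOn.mul (ContDiffOn.mul (ContDiffOn.mul contDiffOn_const ?_)
    (ContDiffOn.mul (by fun_prop) (ww_contDiffOn α))) ?_
  · refine ContDiffOn.div (by fun_prop) (by fun_prop) ?_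
    intro p hp; have : 0 < p.1 := hp.1; positivity
  · exact ((hu.pow 2).add (hv.pow 2)).contDiffOn

lemma G1_deriv (α : ℝ) {u v : ℝ × ℝ → ℝ} (hu : ContDiff ℝ 1 u) (hv : ContDiff ℝ 1 v)
    {R β : ℝ} (h : (R, β) ∈ Qdom) :
    fderiv ℝ (G1 α u v) (R, β) (1, 0) = rho R * ww α β *
      (-R * (u (R, β) * fderiv ℝ u (R, β) (1, 0) + v (R, β) * fderiv ℝ v (R, β) (1, 0))
       - (1/2 - 2*(1/(1+R))) * (u (R, β)^2 + v (R, β)^2)) := by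
  have hR : 0 < R := h.1
  have hd := hasDerivAt_fst_s2 (U := G1 α u v) (R := R) (β := β)
    (((G1_contDiffOn α hu hv).contDiffAt (isOpen_Qdom.mem_nhds h)).differentiableAt (by norm_num))
  have du := hasDerivAt_fst_s2 (U := u) (R := R) (β := β) (hu.differentiable (by norm_num)).differentiableAt
  have dv := hasDerivAt_fst_s2 (U := v) (R := R) (β := β) (hv.differentiable (by norm_num)).differentiableAt
  have h1 : HasDerivAt (fun r : ℝ => (1+r)^4) (4*(1+R)^3) R :=
    (((hasDerivAt_id R).const_add 1).pow 4).congr_deriv (by simp)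
  have h2 : HasDerivAt (fun r : ℝ => r^3) (3*R^2) R :=
    ((hasDerivAt_id R).pow 3).congr_deriv (by simp)
  have h3 := (((h1.div h2 (by positivity)).const_mul (-(1/2))).mul_const (ww α β)).mul
    ((du.pow 2).add (dv.pow 2))
  rw [hd.unique h3]
  unfold rho
  simp only [Pi.add_apply, Pi.pow_apply, Pi.div_apply]
  field_simp
  push_cast
  ring

lemma G2_deriv (α : ℝ) {u v : ℝ × ℝ → ℝ} (hu : ContDiff ℝ 1 u) (hv : ContDiff ℝ 1 v)
    {R β : ℝ} (h : (R, β) ∈ Qdom) :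
    fderiv ℝ (G2 α u v) (R, β) (0, 1) = rho R * ww α β *
      (-(3/(1+R)) * (Real.sin (2*β) *
        (u (R, β) * fderiv ℝ u (R, β) (0, 1) + v (R, β) * fderiv ℝ v (R, β) (0, 1)))
       + (3*α/10) * (1/(1+R)) * Real.cos (2*β) * (u (R, β)^2 + v (R, β)^2)) := by
  have hR : 0 < R := h.1
  have hd := hasDerivAt_snd_s2 (U := G2 α u v) (R := R) (β := β)
    (((G2_contDiffOn α hu hv).contDiffAt (isOpen_Qdom.mem_nhds h)).differentiableAt (by norm_num))
  have du := hasDerivAt_snd_s2 (U := u) (R := R) (β := β) (hu.differentiable (by norm_num)).differentiableAt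
  have dv := hasDerivAt_snd_s2 (U := v) (R := R) (β := β) (hv.differentiable (by norm_num)).differentiableAt
  obtain ⟨d, hdw, ew⟩ := ww_hasDeriv α h.2
  have e : HasDerivAt (fun b : ℝ => Real.sin (2*b)) (Real.cos (2*β) * 2) β :=
    ((Real.hasDerivAt_sin (2*β)).comp β ((hasDerivAt_id β).const_mul 2)).congr_deriv (by simp)
  have h3 := ((e.mul hdw).const_mul (-(3/2) * ((1+R)^3/R^4))).mul ((du.pow 2).add (dv.pow 2))
  rw [hd.unique h3]
  simp only [Pi.add_apply, Pi.pow_apply, Pi.mul_apply]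
  rw [ew]
  have hr : rho R = (1+R) * ((1+R)^3/R^4) := by unfold rho; field_simp
  have hs : (1+R) * (1/(1+R)) = 1 := by field_simp
  have hs3 : 3/(1+R) = 3 * (1/(1+R)) := by ring
  rw [hr, hs3]
  set s := 1/(1+R)
  set m := (1+R)^3/R^4
  have : (1+R) * m * ww α β *
      (-(3*s) * (Real.sin (2*β) *
        (u (R, β) * fderiv ℝ u (R, β) (0, 1) + v (R, β) * fderiv ℝ v (R, β) (0, 1)))
       + (3*α/10) * s * Real.cos (2*β) * (u (R, β)^2 + v (R, β)^2)) = ((1+R)*s) * (m * ww α β *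
      (-3 * (Real.sin (2*β) *
        (u (R, β) * fderiv ℝ u (R, β) (0, 1) + v (R, β) * fderiv ℝ v (R, β) (0, 1)))
       + (3*α/10) * Real.cos (2*β) * (u (R, β)^2 + v (R, β)^2))) := by ring
  rw [this, hs]
  push_cast
  ring

lemma rho_contOn : ContinuousOn (fun p : ℝ × ℝ => rho p.1) Qdom := by
  unfold rho
  refine ContinuousOn.div (by fun_prop) (by fun_prop) ?_
  intro p hp; have : 0 < p.1 := hp.1; positivity

lemma dG_contOn (α : ℝ) : ContinuousOn (fun p : ℝ × ℝ => dG α p.2) Qdom := by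
  unfold dG
  refine ContinuousOn.mul (by fun_prop) ?_
  exact ContinuousOn.rpow_const (by fun_prop) (fun p hp => Or.inl (angle_facts hp.2).2.1.ne')

lemma AA_contOn (α : ℝ) (Ω : ℝ → ℝ → ℝ) : ContinuousOn (AA α Ω) Qdom := by
  unfold AA
  refine ContinuousOn.mul (continuousOn_const.mul (dG_contOn α)) (continuousOn_const.mul ?_)
  refine ContinuousOn.div (by fun_prop) (by fun_prop) ?_
  intro p hp; have : 0 < p.1 := hp.1; positivity

lemma BB_contOn (α : ℝ) {Ω : ℝ → ℝ → ℝ} (hT : ContinuousOn (tL12 Ω) (Ioi 0)) :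
    ContinuousOn (BB α Ω) Qdom := by
  unfold BB
  have hT' : ContinuousOn (fun p : ℝ × ℝ => tL12 Ω p.1) Qdom :=
    hT.comp continuousOn_fst (fun p hp => hp.1)
  refine ContinuousOn.mul (continuousOn_const.mul (dG_contOn α))
    ((hT'.mul ?_).sub (continuousOn_const.mul ?_))
  · refine ContinuousOn.div (by fun_prop) (by fun_prop) ?_
    intro p hp; have : 0 < p.1 := hp.1; positivity
  · refine ContinuousOn.div (by fun_prop) (by fun_prop) ?_
    intro p hp; have : 0 < p.1 := hp.1; positivity

lemma inv_contOn : ContinuousOn (fun p : ℝ × ℝ => 3/(1+p.1)) Qdom := by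
  refine ContinuousOn.div (by fun_prop) (by fun_prop) ?_
  intro p hp; have : 0 < p.1 := hp.1; positivity

lemma norm2_sq_s2 {α : ℝ} {F : ℝ → ℝ → ℝ} (hF : ContDiff ℝ 2 (Function.uncurry F))
    (hi : IntegrableOn (fun p : ℝ × ℝ => uu F p ^ 2 * (rho p.1 * ww α p.2)) Qdom) :
    (norm2 (fun R β => Dbeta F R β * Real.sqrt (phi2 α R β)))^2 =
      ∫ p in Qdom, uu F p ^ 2 * (rho p.1 * ww α p.2) := by
  have e : inner2 (fun R β => Dbeta F R β * Real.sqrt (phi2 α R β))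
      (fun R β => Dbeta F R β * Real.sqrt (phi2 α R β)) =
      ∫ p in Qdom, uu F p ^ 2 * (rho p.1 * ww α p.2) := by
    unfold inner2
    refine iterated_eq hi (fun R β h => ?_)
    have hR : 0 < R := h.1
    have hw := ww_pos α h.2
    have hr : 0 < rho R := by unfold rho; positivity
    have hphi : phi2 α R β = rho R * ww α β := rfl
    beta_reduce
    rw [Dbeta_eq hF, hphi]
    have := Real.mul_self_sqrt (mul_pos hr hw).le
    calc _ = uu F (R, β) ^ 2 * (Real.sqrt (rho R * ww α β) * Real.sqrt (rho R * ww α β)) := by ring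
      _ = _ := by rw [this]
  unfold norm2
  rw [Real.sq_sqrt, e]
  rw [e]
  refine setIntegral_nonneg isOpen_Qdom.measurableSet (fun p h => ?_)
  have hR : 0 < p.1 := h.1
  have hw := ww_pos α h.2
  have hr : 0 < rho p.1 := by unfold rho; positivity
  positivity

/-- weighted `L²` estimate for the angular derivatives `D_β Ω, D_β η`. -/
theorem angular_derivative_estimate :
    ∃ C : ℝ, ∀ α : ℝ, 0 < α → α ≤ 1/1000 →
      ∀ Ω η : ℝ → ℝ → ℝ,
        ContDiff ℝ 2 (Function.uncurry Ω) → ContDiff ℝ 2 (Function.uncurry η) →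
        suppIn Ω → suppIn η →
        inner2 (Dbeta (opL1 α Ω η)) (fun R β => Dbeta Ω R β * phi2 α R β)
            + inner2 (Dbeta (opL2 α Ω η)) (fun R β => Dbeta η R β * phi2 α R β)
          ≤ -(1/5 - α) *
              ((norm2 (fun R β => Dbeta Ω R β * Real.sqrt (phi2 α R β)))^2
                + (norm2 (fun R β => Dbeta η R β * Real.sqrt (phi2 α R β)))^2)
            + C * α * ((L12 Ω 0)^2 + (normR (fun R => tL12 Ω R / R))^2) := by
  refine ⟨23085, fun α h0 h1 Ω η hΩ hη sΩ sη => ?_⟩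
  obtain ⟨K1, hK1, hKQ1, hz1⟩ := sΩ
  obtain ⟨K2, hK2, hKQ2, hz2⟩ := sη
  have hK : IsCompact (K1 ∪ K2) := hK1.union hK2
  have hKQ : K1 ∪ K2 ⊆ Qdom := union_subset hKQ1 hKQ2
  set K := K1 ∪ K2 with hKdef
  have hzΩ : ∀ x y : ℝ, (x, y) ∉ K → Ω x y = 0 := fun x y h => hz1 x y (fun h' => h (Or.inl h'))
  have hzη : ∀ x y : ℝ, (x, y) ∉ K → η x y = 0 := fun x y h => hz2 x y (fun h' => h (Or.inr h'))
  obtain ⟨hTc, hTi⟩ := tL12_facts hΩ hK hKQ hzΩ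
  set u := uu Ω with hu
  set v := uu η with hv
  have cu : ContDiff ℝ 1 u := uu_contDiff hΩ
  have cv : ContDiff ℝ 1 v := uu_contDiff hη
  have zu : ∀ p ∉ K, u p = 0 := uu_zero hK hzΩ
  have zv : ∀ p ∉ K, v p = 0 := uu_zero hK hzη
  have ucont := cu.continuous
  have vcont := cv.continuous
  have ccos := (ww_contDiffOn α).continuousOn
  have cphi : ContinuousOn (fun p : ℝ × ℝ => rho p.1 * ww α p.2) Qdom :=
    rho_contOn.mul ccos
  have uR := cont_fderiv_apply cu (1, 0)
  have uB := cont_fderiv_apply cu (0, 1)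
  have vR := cont_fderiv_apply cv (1, 0)
  have vB := cont_fderiv_apply cv (0, 1)
  -- squares
  have iu : IntegrableOn (fun p : ℝ × ℝ => u p ^ 2 * (rho p.1 * ww α p.2)) Qdom :=
    integrableOn_Q hK hKQ ((ucont.pow 2).continuousOn.mul cphi) (fun p hp => by simp [zu p hp])
  have iv : IntegrableOn (fun p : ℝ × ℝ => v p ^ 2 * (rho p.1 * ww α p.2)) Qdom :=
    integrableOn_Q hK hKQ ((vcont.pow 2).continuousOn.mul cphi) (fun p hp => by simp [zv p hp])
  -- the two integrands
  set I1 : ℝ × ℝ → ℝ := fun p => (- (p.1 * fderiv ℝ u p (1, 0))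
      - (3/(1+p.1)) * (Real.sin (2*p.2) * fderiv ℝ u p (0, 1))
      - u p + v p + AA α Ω p) * (u p * (rho p.1 * ww α p.2)) with hI1
  set I2 : ℝ × ℝ → ℝ := fun p => (- (p.1 * fderiv ℝ v p (1, 0))
      - (3/(1+p.1)) * (Real.sin (2*p.2) * fderiv ℝ v p (0, 1))
      + (-2 + 3/(1+p.1)) * v p + BB α Ω p) * (v p * (rho p.1 * ww α p.2)) with hI2
  have csin : Continuous (fun p : ℝ × ℝ => Real.sin (2*p.2)) := by fun_prop
  have iI1 : IntegrableOn I1 Qdom := by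
    refine integrableOn_Q hK hKQ ?_ (fun p hp => by simp [hI1, zu p hp])
    refine ContinuousOn.mul ?_ (ucont.continuousOn.mul cphi)
    refine ((((continuous_fst.mul uR).neg.continuousOn.sub
      (inv_contOn.mul (csin.mul uB).continuousOn)).sub ucont.continuousOn).add
      vcont.continuousOn).add (AA_contOn α Ω)
  have iI2 : IntegrableOn I2 Qdom := by
    refine integrableOn_Q hK hKQ ?_ (fun p hp => by simp [hI2, zv p hp])
    refine ContinuousOn.mul ?_ (vcont.continuousOn.mul cphi)
    refine ((((continuous_fst.mul vR).neg.continuousOn.sub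
      (inv_contOn.mul (csin.mul vB).continuousOn)).add
      ((continuousOn_const.add inv_contOn).mul vcont.continuousOn))).add (BB_contOn α hTc)
  have E1 : inner2 (Dbeta (opL1 α Ω η)) (fun R β => Dbeta Ω R β * phi2 α R β)
      = ∫ p in Qdom, I1 p := by
    refine iterated_eq iI1 (fun R β h => ?_)
    beta_reduce
    rw [Dbeta_opL1 h0 hΩ hη h, Dbeta_eq hΩ]; rfl
  have E2 : inner2 (Dbeta (opL2 α Ω η)) (fun R β => Dbeta η R β * phi2 α R β)
      = ∫ p in Qdom, I2 p := by
    refine iterated_eq iI2 (fun R β h => ?_)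
    beta_reduce
    rw [Dbeta_opL2 h0 hη h, Dbeta_eq hη]; rfl
  -- fluxes
  have zG1 : ∀ p ∉ K, G1 α u v p = 0 := fun p hp => by simp [G1, zu p hp, zv p hp]
  have zG2 : ∀ p ∉ K, G2 α u v p = 0 := fun p hp => by simp [G2, zu p hp, zv p hp]
  obtain ⟨iG1, eG1⟩ := integral_fderiv_zero hK hKQ
    (contDiff_ext hK hKQ (G1_contDiffOn α cu cv) zG1) zG1 (1, 0)
  obtain ⟨iG2, eG2⟩ := integral_fderiv_zero hK hKQ
    (contDiff_ext hK hKQ (G2_contDiffOn α cu cv) zG2) zG2 (0, 1)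
  -- forcing
  obtain ⟨iΘ, eΘ⟩ := Theta_int h0 h1
  obtain ⟨ir, er⟩ := rad_int
  set H : ℝ → ℝ := fun R => 7695 * (L12 Ω 0)^2 * (1/(1+R)^2) + 810 * (tL12 Ω R / R)^2 with hH
  set Θ : ℝ → ℝ := fun β => (dG α β)^2 * ww α β with hΘ
  have iH : IntegrableOn H (Ioi 0) := (ir.const_mul _).add (hTi.const_mul _)
  have eH : ∫ R in Ioi (0:ℝ), H R = 7695 * (L12 Ω 0)^2
      + 810 * ∫ R in Ioi (0:ℝ), (tL12 Ω R / R)^2 := by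
    rw [hH, integral_add (ir.const_mul _) (hTi.const_mul _), integral_const_mul,
      integral_const_mul, er, mul_one]
  have iHΘ : IntegrableOn (fun p : ℝ × ℝ => H p.1 * Θ p.2) Qdom := by
    have : Integrable (fun p : ℝ × ℝ => H p.1 * Θ p.2)
      ((volume.restrict (Ioi (0:ℝ))).prod (volume.restrict (Ioo (0:ℝ) (Real.pi/2)))) :=
      Integrable.mul_prod iH iΘ
    rw [Measure.prod_restrict] at this
    exact this
  have eHΘ : ∫ p in Qdom, H p.1 * Θ p.2
      = (∫ R in Ioi (0:ℝ), H R) * ∫ β in Ioo (0:ℝ) (Real.pi/2), Θ β :=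
    setIntegral_prod_mul H Θ _ _
  -- pointwise inequality
  have key : ∀ p ∈ Qdom, I1 p + I2 p ≤ fderiv ℝ (G1 α u v) p (1, 0) + fderiv ℝ (G2 α u v) p (0, 1)
      + (-(1/5-α)) * (u p ^ 2 * (rho p.1 * ww α p.2) + v p ^ 2 * (rho p.1 * ww α p.2))
      + H p.1 * Θ p.2 := by
    rintro ⟨R, β⟩ h
    have hR : 0 < R := h.1
    have hw := ww_pos α h.2
    have hr : 0 < rho R := by unfold rho; positivity
    have hφ : 0 < rho R * ww α β := mul_pos hr hw
    have f1 := forcing_bound h0 h1 Ω h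
    rw [G1_deriv α cu cv h, G2_deriv α cu cv h]
    have hs1 : 1/(1+R) ≤ 1 := by rw [div_le_one (by positivity)]; linarith
    have q := quad_bound (u := u (R, β)) (v := v (R, β)) (A := AA α Ω (R, β)) (B := BB α Ω (R, β))
      h0 (by positivity : 0 ≤ 1/(1+R)) hs1 (Real.neg_one_le_cos (2*β))
    have q' := mul_le_mul_of_nonneg_left q hφ.le
    have hs3 : 3/(1+R) = 3 * (1/(1+R)) := by ring
    simp only [hI1, hI2, hH, hΘ, hs3]
    linarith
  have i12 : IntegrableOn (fun p => I1 p + I2 p) Qdom := iI1.add iI2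
  have iuv : IntegrableOn (fun p => (-(1/5-α)) * (u p ^ 2 * (rho p.1 * ww α p.2)
      + v p ^ 2 * (rho p.1 * ww α p.2))) Qdom := (iu.add iv).const_mul _
  have iG : IntegrableOn (fun p => fderiv ℝ (G1 α u v) p (1, 0) + fderiv ℝ (G2 α u v) p (0, 1)) Qdom :=
    iG1.add iG2
  have iGuv : IntegrableOn (fun p => fderiv ℝ (G1 α u v) p (1, 0) + fderiv ℝ (G2 α u v) p (0, 1)
      + (-(1/5-α)) * (u p ^ 2 * (rho p.1 * ww α p.2) + v p ^ 2 * (rho p.1 * ww α p.2))) Qdom :=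
    iG.add iuv
  have main := setIntegral_mono_on i12 (iGuv.add iHΘ) isOpen_Qdom.measurableSet key
  simp only [Pi.add_apply] at main
  rw [integral_add iI1 iI2, integral_add iGuv iHΘ, integral_add iG iuv, integral_add iG1 iG2,
    integral_const_mul, integral_add iu iv, eG1, eG2, eHΘ, eH] at main
  rw [E1, E2, norm2_sq_s2 hΩ iu, norm2_sq_s2 hη iv]
  have eN : (normR (fun R => tL12 Ω R / R))^2 = ∫ R in Ioi (0:ℝ), (tL12 Ω R / R)^2 := by
    unfold normR
    exact Real.sq_sqrt (integral_nonneg (fun R => sq_nonneg _))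
  have nN : 0 ≤ ∫ R in Ioi (0:ℝ), (tL12 Ω R / R)^2 := integral_nonneg (fun R => sq_nonneg _)
  rw [eN]
  refine main.trans ?_
  set N := ∫ R in Ioi (0:ℝ), (tL12 Ω R / R)^2
  set t := ∫ β in Ioo (0:ℝ) (Real.pi/2), Θ β
  have nL : 0 ≤ (L12 Ω 0)^2 := sq_nonneg _
  have b1 : (7695 * (L12 Ω 0)^2 + 810 * N) * t ≤ (7695 * (L12 Ω 0)^2 + 810 * N) * (3*α) :=
    mul_le_mul_of_nonneg_left eΘ (by positivity)
  have b2 : 0 ≤ α * N := by positivity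
  nlinarith

end Paper
end
end

section
/- There is an absolute constant K₃ > 0 such that for every α ∈ (0, 1/1000] and all continuously differentiable Ω, η with compact support contained in (0,∞)×(0,π/2): ⟨L₁(Ω,η), Ω φ₁⟩ + ⟨L₂(Ω,η), η φ₁⟩ ≤ −(1/6) (‖Ω φ₁^{1/2}‖₂² + ‖η φ₁^{1/2}‖₂²) + K₃ (L₁₂(Ω)(0)² + ‖L̃₁₂(Ω)/R‖²_{L²(R)}). -/
open Real MeasureTheory Set

noncomputable section

namespace Paper

/-! ### Helper lemmas -/

/-- `f` vanishes off a box. -/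
def boxIn (a b c d : ℝ) (f : ℝ → ℝ → ℝ) : Prop :=
  ∀ x y : ℝ, (x, y) ∉ Icc a b ×ˢ Icc c d → f x y = 0

lemma Qdom_meas : MeasurableSet Qdom := measurableSet_Ioi.prod measurableSet_Ioo

lemma box_sub {a b c d : ℝ} (ha : 0 < a) (hc : 0 < c) (hd : d < Real.pi/2) :
    Icc a b ×ˢ Icc c d ⊆ Qdom := by
  rintro ⟨x, y⟩ ⟨hx, hy⟩
  exact ⟨lt_of_lt_of_le ha hx.1, lt_of_lt_of_le hc hy.1, lt_of_le_of_lt hy.2 hd⟩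

lemma exists_box {f : ℝ → ℝ → ℝ} (h : suppIn f) :
    ∃ a b c d : ℝ, 0 < a ∧ 0 < c ∧ d < Real.pi/2 ∧ boxIn a b c d f := by
  obtain ⟨K, hK, hsub, hz⟩ := h
  rcases K.eq_empty_or_nonempty with h0 | hne
  · subst h0
    exact ⟨1, 1, 1, 1, one_pos, one_pos, by linarith [Real.pi_gt_three],
      fun x y _ => hz x y (by simp)⟩
  · obtain ⟨p1, hp1, h1⟩ := hK.exists_isMinOn hne (continuous_fst.continuousOn)
    obtain ⟨p2, hp2, h2⟩ := hK.exists_isMaxOn hne (continuous_fst.continuousOn)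
    obtain ⟨p3, hp3, h3⟩ := hK.exists_isMinOn hne (continuous_snd.continuousOn)
    obtain ⟨p4, hp4, h4⟩ := hK.exists_isMaxOn hne (continuous_snd.continuousOn)
    refine ⟨p1.1, p2.1, p3.2, p4.2, (hsub hp1).1, (hsub hp3).2.1, (hsub hp4).2.2, ?_⟩
    intro x y hxy
    apply hz
    intro hm
    exact hxy ⟨⟨h1 hm, h2 hm⟩, ⟨h3 hm, h4 hm⟩⟩

lemma boxIn.mono {a b c d a' b' c' d' : ℝ} {f : ℝ → ℝ → ℝ} (h : boxIn a b c d f)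
    (h1 : a' ≤ a) (h2 : b ≤ b') (h3 : c' ≤ c) (h4 : d ≤ d') : boxIn a' b' c' d' f := by
  intro x y hxy
  apply h
  rintro ⟨hx, hy⟩
  exact hxy ⟨⟨h1.trans hx.1, hx.2.trans h2⟩, ⟨h3.trans hy.1, hy.2.trans h4⟩⟩

lemma exists_box2 {f g : ℝ → ℝ → ℝ} (h : suppIn f) (h' : suppIn g) :
    ∃ a b c d : ℝ, 0 < a ∧ 0 < c ∧ d < Real.pi/2 ∧ boxIn a b c d f ∧ boxIn a b c d g := by
  obtain ⟨a, b, c, d, ha, hc, hd, hf⟩ := exists_box h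
  obtain ⟨a', b', c', d', ha', hc', hd', hg⟩ := exists_box h'
  exact ⟨min a a', max b b', min c c', max d d', lt_min ha ha', lt_min hc hc', max_lt hd hd',
    hf.mono (min_le_left _ _) (le_max_left _ _) (min_le_left _ _) (le_max_left _ _),
    hg.mono (min_le_right _ _) (le_max_right _ _) (min_le_right _ _) (le_max_right _ _)⟩

lemma int_box {a b c d : ℝ} (ha : 0 < a) (hc : 0 < c) (hd : d < Real.pi/2) {f : ℝ → ℝ → ℝ}
    (hf : boxIn a b c d f) (hcont : ContinuousOn (Function.uncurry f) Qdom) :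
    IntegrableOn (Function.uncurry f) Qdom := by
  have hK : IsCompact (Icc a b ×ˢ Icc c d : Set (ℝ × ℝ)) := isCompact_Icc.prod isCompact_Icc
  have h1 : IntegrableOn (Function.uncurry f) (Icc a b ×ˢ Icc c d) :=
    (hcont.mono (box_sub ha hc hd)).integrableOn_compact hK
  refine h1.of_forall_sdiff_eq_zero Qdom_meas ?_
  rintro ⟨x, y⟩ hxy
  exact hf x y hxy.2

lemma iter_eq {f : ℝ → ℝ → ℝ} (h : IntegrableOn (Function.uncurry f) Qdom) :
    ∫ R in Ioi (0:ℝ), ∫ β in Ioo (0:ℝ) (Real.pi/2), f R β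
      = ∫ p in Qdom, f p.1 p.2 := by
  have := MeasureTheory.setIntegral_prod (μ := volume) (ν := volume)
    (s := Ioi (0:ℝ)) (t := Ioo (0:ℝ) (Real.pi/2)) (Function.uncurry f) h
  exact this.symm

lemma iter_eq' {f : ℝ → ℝ → ℝ} (h : IntegrableOn (Function.uncurry f) Qdom) :
    ∫ β in Ioo (0:ℝ) (Real.pi/2), ∫ R in Ioi (0:ℝ), f R β
      = ∫ p in Qdom, f p.1 p.2 := by
  rw [← iter_eq h]
  have h' : Integrable (Function.uncurry f)
      ((volume.restrict (Ioi (0:ℝ))).prod (volume.restrict (Ioo (0:ℝ) (Real.pi/2)))) := by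
    rw [Measure.prod_restrict]; exact h
  exact (MeasureTheory.integral_integral_swap h').symm

lemma oneD {a b u v : ℝ} (hu : u < a) (hv : b < v) (huv : u < v) {S : Set ℝ} (hS : Icc u v ⊆ S)
    (hSm : MeasurableSet S) {f f' : ℝ → ℝ}
    (hf : ∀ x, x ∉ Icc a b → f x = 0) (hf' : ∀ x, x ∉ Icc a b → f' x = 0)
    (hd : ∀ x ∈ S, HasDerivAt f (f' x) x) (hc : ContinuousOn f' S) :
    ∫ x in S, f' x = 0 := by
  have e1 : ∫ x in S, f' x = ∫ x in Ioc u v, f' x := by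
    refine setIntegral_eq_of_subset_of_forall_sdiff_eq_zero hSm
      (Ioc_subset_Icc_self.trans hS) ?_
    intro x hx
    apply hf'
    rintro ⟨h1, h2⟩
    exact hx.2 ⟨hu.trans_le h1, h2.trans hv.le⟩
  rw [e1, ← intervalIntegral.integral_of_le huv.le,
    intervalIntegral.integral_eq_sub_of_hasDerivAt (f := f)]
  · rw [hf u (fun h => absurd h.1 (not_le.2 hu)), hf v (fun h => absurd h.2 (not_le.2 hv)), sub_zero]
  · intro x hx
    rw [uIcc_of_le huv.le] at hx
    exact hd x (hS hx)
  · apply ContinuousOn.intervalIntegrable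
    rw [uIcc_of_le huv.le]
    exact hc.mono hS

lemma zero_R {a b c d : ℝ} (ha : 0 < a) (hc : 0 < c) (hd : d < Real.pi/2) {f f' : ℝ → ℝ → ℝ}
    (hf : boxIn a b c d f) (hf' : boxIn a b c d f')
    (hder : ∀ R ∈ Ioi (0:ℝ), ∀ β ∈ Ioo (0:ℝ) (Real.pi/2),
      HasDerivAt (fun r => f r β) (f' R β) R)
    (hcont : ContinuousOn (Function.uncurry f') Qdom) :
    ∫ p in Qdom, f' p.1 p.2 = 0 := by
  rw [← iter_eq' (int_box ha hc hd hf' hcont)]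
  rw [setIntegral_congr_fun (g := fun _ => (0:ℝ)) measurableSet_Ioo, integral_zero]
  intro β hβ
  have hpos : a/2 < |b| + a + 1 := by linarith [abs_nonneg b]
  refine oneD (a := a) (b := b) (u := a/2) (v := |b| + a + 1) (by linarith)
    (by linarith [le_abs_self b]) hpos ?_ measurableSet_Ioi (f := fun r => f r β) ?_ ?_ ?_ ?_
  · intro x hx
    exact lt_of_lt_of_le (by linarith) hx.1
  · intro x hx
    exact hf _ _ (fun h => hx h.1)
  · intro x hx
    exact hf' _ _ (fun h => hx h.1)
  · intro x hx
    exact hder x hx β hβ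
  · exact hcont.comp (f := fun r => (r, β)) (by fun_prop) (fun x hx => ⟨hx, hβ⟩)

lemma zero_B {a b c d : ℝ} (ha : 0 < a) (hc : 0 < c) (hd : d < Real.pi/2) {f f' : ℝ → ℝ → ℝ}
    (hf : boxIn a b c d f) (hf' : boxIn a b c d f')
    (hder : ∀ R ∈ Ioi (0:ℝ), ∀ β ∈ Ioo (0:ℝ) (Real.pi/2),
      HasDerivAt (fun r => f R r) (f' R β) β)
    (hcont : ContinuousOn (Function.uncurry f') Qdom) :
    ∫ p in Qdom, f' p.1 p.2 = 0 := by
  rw [← iter_eq (int_box ha hc hd hf' hcont)]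
  rw [setIntegral_congr_fun (g := fun _ => (0:ℝ)) measurableSet_Ioi, integral_zero]
  intro R hR
  have hp := Real.pi_gt_three
  have h1 : min (c/2) (Real.pi/8) < c := lt_of_le_of_lt (min_le_left _ _) (by linarith)
  have h2 : d < max ((d + Real.pi/2)/2) (Real.pi/4) :=
    lt_of_lt_of_le (by linarith) (le_max_left _ _)
  have h3 : min (c/2) (Real.pi/8) < max ((d + Real.pi/2)/2) (Real.pi/4) :=
    lt_of_le_of_lt (min_le_right _ _) (lt_of_lt_of_le (by linarith) (le_max_right _ _))
  refine oneD h1 h2 h3 ?_ measurableSet_Ioo (f := fun r => f R r) ?_ ?_ ?_ ?_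
  · intro x hx
    exact ⟨lt_of_lt_of_le (lt_min (by linarith) (by linarith)) hx.1,
      lt_of_le_of_lt hx.2 (max_lt (by linarith) (by linarith))⟩
  · intro x hx
    exact hf _ _ (fun h => hx h.2)
  · intro x hx
    exact hf' _ _ (fun h => hx h.2)
  · intro x hx
    exact hder R hR x hx
  · exact hcont.comp (f := fun r => (R, r)) (by fun_prop) (fun x hx => ⟨hR, hx⟩)

lemma sin2_pos {β : ℝ} (h : β ∈ Ioo (0:ℝ) (Real.pi/2)) : 0 < Real.sin (2*β) :=
  Real.sin_pos_of_pos_of_lt_pi (by linarith [h.1]) (by linarith [h.2])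

lemma s_int : IntegrableOn (fun β => Real.sin (2*β) ^ (-(99/100 : ℝ)))
    (Ioo (0:ℝ) (Real.pi/2)) := by
  have hp := Real.pi_gt_three
  have i1 : IntervalIntegrable (fun x : ℝ => x ^ (-(99/100 : ℝ))) volume 0 (Real.pi/2) :=
    intervalIntegral.intervalIntegrable_rpow' (by norm_num)
  have i2 : IntervalIntegrable (fun x : ℝ => (Real.pi/2 - x) ^ (-(99/100 : ℝ))) volume
      0 (Real.pi/2) := by
    have := (i1.comp_sub_left (Real.pi/2)).symm
    simpa using this
  have h1 := ((intervalIntegrable_iff_integrableOn_Ioo_of_le (by positivity)).1 i1)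
  have h2 := ((intervalIntegrable_iff_integrableOn_Ioo_of_le (by positivity)).1 i2)
  refine Integrable.mono' (h1.add h2) ?_ ?_
  · exact (by fun_prop : Measurable fun β => Real.sin (2*β) ^ (-(99/100 : ℝ))).aestronglyMeasurable
  · refine (ae_restrict_iff' measurableSet_Ioo).2 (Filter.Eventually.of_forall ?_)
    intro β hβ
    have hs := sin2_pos hβ
    rw [Real.norm_of_nonneg (by positivity)]
    have hb1 : 0 < β := hβ.1
    have hb2 : 0 < Real.pi/2 - β := by linarith [hβ.2]
    have q1 : 0 ≤ β ^ (-(99/100 : ℝ)) := by positivity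
    have q2 : 0 ≤ (Real.pi/2 - β) ^ (-(99/100 : ℝ)) := by positivity
    have key : ∀ x : ℝ, 0 < x → x ≤ Real.pi/4 → x ≤ Real.sin (2*x) := by
      intro x hx hx'
      have := Real.mul_le_sin (x := 2*x) (by linarith) (by linarith)
      refine le_trans ?_ this
      have h4 := Real.pi_le_four
      rw [div_mul_eq_mul_div, le_div_iff₀ Real.pi_pos]
      nlinarith
    simp only [Pi.add_apply]
    rcases le_total β (Real.pi/4) with h | h
    · have := Real.rpow_le_rpow_of_nonpos hb1 (key β hb1 h) (z := -(99/100:ℝ)) (by norm_num)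
      linarith
    · have e : Real.sin (2*β) = Real.sin (2*(Real.pi/2 - β)) := by
        rw [← Real.sin_pi_sub]; congr 1; ring
      have := Real.rpow_le_rpow_of_nonpos hb2 (key _ hb2 (by linarith)) (z := -(99/100:ℝ))
        (by norm_num)
      rw [← e] at this
      linarith

lemma cst_ge {α : ℝ} (h0 : 0 < α) (h1 : α ≤ 1) : (2/Real.pi) * (2/3) ≤ cst α := by
  unfold cst Γf
  have hp := Real.pi_pos
  refine mul_le_mul_of_nonneg_left ?_ (by positivity)
  have e : ∫ β in Ioo (0:ℝ) (Real.pi/2), Real.cos β * Real.sin (2*β) = 2/3 := by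
    rw [← integral_Ioc_eq_integral_Ioo, ← intervalIntegral.integral_of_le (by positivity),
      intervalIntegral.integral_eq_sub_of_hasDerivAt (f := fun x => -(2/3) * Real.cos x ^ 3)]
    · simp
    · intro x _
      have := ((Real.hasDerivAt_cos x).pow 3).const_mul (-(2/3))
      refine HasDerivAt.congr_deriv this ?_
      rw [Real.sin_two_mul]; push_cast; ring
    · exact (by fun_prop : Continuous fun β => Real.cos β * Real.sin (2*β)).intervalIntegrable _ _
  rw [← e]
  have hc : Continuous fun β => Real.cos β ^ α * Real.sin (2*β) :=
    (Real.continuous_cos.rpow_const (fun _ => Or.inr h0.le)).mul (by fun_prop)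
  refine setIntegral_mono_on ?_ ?_ measurableSet_Ioo ?_
  · exact ((by fun_prop : Continuous fun β => Real.cos β * Real.sin (2*β)).integrableOn_Icc).mono_set
      Ioo_subset_Icc_self
  · exact hc.integrableOn_Icc.mono_set Ioo_subset_Icc_self
  · intro x hx
    have hcx : 0 < Real.cos x := Real.cos_pos_of_mem_Ioo ⟨by linarith [hx.1], hx.2⟩
    refine mul_le_mul_of_nonneg_right ?_ (sin2_pos hx).le
    have := Real.rpow_le_rpow_of_exponent_ge hcx (Real.cos_le_one x) h1
    rwa [Real.rpow_one] at this

lemma tL12_facts_s3 {a b c d : ℝ} (ha : 0 < a) (hc : 0 < c) (hd : d < Real.pi/2) {Ω : ℝ → ℝ → ℝ}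
    (hΩ : Continuous (Function.uncurry Ω)) (hb : boxIn a b c d Ω) :
    ContinuousOn (tL12 Ω) (Ioi 0) ∧
      IntegrableOn (fun R => (tL12 Ω R / R)^2) (Ioi 0) := by
  set F : ℝ → ℝ := fun s => ∫ β in Ioo (0:ℝ) (Real.pi/2), Ω s β * Real.sin (2*β) / s with hF
  have hI : IntegrableOn (Function.uncurry fun s β => Ω s β * Real.sin (2*β) / s) Qdom := by
    refine int_box ha hc hd (a := a) (b := b) (c := c) (d := d) ?_ ?_
    · intro x y h; simp [hb x y h]
    · have : ContinuousOn (fun p : ℝ × ℝ => Function.uncurry Ω p * Real.sin (2*p.2) / p.1) Qdom :=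
        ContinuousOn.div (by fun_prop) (by fun_prop) (fun p hp => (ne_of_gt hp.1))
      exact this
  have hFi : IntegrableOn F (Ioi 0) := by
    have h' : Integrable (Function.uncurry fun s β => Ω s β * Real.sin (2*β) / s)
      ((volume.restrict (Ioi (0:ℝ))).prod (volume.restrict (Ioo (0:ℝ) (Real.pi/2)))) := by
      rw [Measure.prod_restrict]; exact hI
    exact h'.integral_prod_left
  have hT : ∀ R, 0 ≤ R → tL12 Ω R = - ∫ s in Ioc 0 R, F s := by
    intro R hR
    have e : ∫ s in Ioi (0:ℝ), F s = (∫ s in Ioc 0 R, F s) + ∫ s in Ioi R, F s := by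
      rw [← Ioc_union_Ioi_eq_Ioi hR]
      exact setIntegral_union Ioc_disjoint_Ioi_same measurableSet_Ioi
        (hFi.mono_set Ioc_subset_Ioi_self) (hFi.mono_set (Ioi_subset_Ioi hR))
    have : tL12 Ω R = (∫ s in Ioi R, F s) - ∫ s in Ioi (0:ℝ), F s := rfl
    rw [this, e]; ring
  have hcont : ContinuousOn (tL12 Ω) (Ioi 0) := by
    have hg : Integrable ((Ioi (0:ℝ)).indicator F) := (integrable_indicator_iff measurableSet_Ioi).2 hFi
    have hcp : Continuous fun R => ∫ s in (0:ℝ)..R, (Ioi (0:ℝ)).indicator F s :=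
      intervalIntegral.continuous_primitive (fun _ _ => hg.intervalIntegrable) 0
    refine (hcp.neg.continuousOn).congr ?_
    intro R hR
    rw [hT R (le_of_lt hR)]
    simp only [Pi.neg_apply]
    rw [intervalIntegral.integral_of_le (le_of_lt hR)]
    congr 1
    refine setIntegral_congr_fun measurableSet_Ioc ?_
    intro s hs
    simp [indicator, hs.1]
  refine ⟨hcont, ?_⟩
  have hzero : ∀ R, 0 < R → R < a → tL12 Ω R = 0 := by
    intro R hR hRa
    rw [hT R hR.le, setIntegral_congr_fun (g := fun _ => (0:ℝ)) measurableSet_Ioc, integral_zero,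
      neg_zero]
    intro s hs
    have : ∀ β, Ω s β = 0 := fun β => hb s β (fun h => by linarith [h.1.1, hs.2])
    simp [hF, this]
  have hbd : ∀ R, 0 < R → |tL12 Ω R| ≤ ∫ s in Ioi (0:ℝ), |F s| := by
    intro R hR
    rw [hT R hR.le, abs_neg]
    refine (abs_integral_le_integral_abs).trans ?_
    exact setIntegral_mono_set hFi.abs (Filter.Eventually.of_forall fun _ => abs_nonneg _)
      (Filter.Eventually.of_forall Ioc_subset_Ioi_self)
  set B := ∫ s in Ioi (0:ℝ), |F s|
  have hmain : IntegrableOn (fun R => (tL12 Ω R / R)^2) (Ioi (a/2)) := by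
    have hi := (integrableOn_Ioi_rpow_of_lt (a := -2) (by norm_num) (half_pos ha)).const_mul (B^2)
    refine Integrable.mono' hi ?_ ?_
    · apply ContinuousOn.aestronglyMeasurable _ measurableSet_Ioi
      have hc2 : ContinuousOn (tL12 Ω) (Ioi (a/2)) := hcont.mono (Ioi_subset_Ioi (by linarith))
      exact (hc2.div continuousOn_id
        (fun x hx => (ne_of_gt (lt_trans (half_pos ha) hx)))).pow 2
    · refine (ae_restrict_iff' measurableSet_Ioi).2 (Filter.Eventually.of_forall ?_)
      intro R hR
      have hR0 : 0 < R := lt_trans (half_pos ha) hR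
      rw [Real.norm_of_nonneg (by positivity), Real.rpow_neg hR0.le, div_pow, div_eq_mul_inv]
      norm_cast
      refine mul_le_mul_of_nonneg_right ?_ (by positivity)
      exact sq_le_sq' (by linarith [neg_abs_le (tL12 Ω R), hbd R hR0])
        ((le_abs_self _).trans (hbd R hR0))
  refine hmain.of_forall_sdiff_eq_zero measurableSet_Ioi ?_
  intro R hR
  have h2 : R ≤ a/2 := not_lt.1 hR.2
  rw [hzero R hR.1 (by linarith)]; simp

lemma pw {t m O E k A g T : ℝ} (ht0 : 0 < t) (ht1 : t ≤ 1) (hm : m ≤ 1)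
    (hk0 : 0 ≤ k) (hk1 : k ≤ 3/2) (hg0 : 0 ≤ g) (hg1 : g ≤ 1) :
    O^2*((1/2)*(1-4*t) + (3/100)*t*m - 1) + O*E
      + E^2*((1/2)*(1-4*t) + (3/100)*t*m - 2 + 3*t)
      - 6*k*A*g*t*O - 18*k*A*g*t^2*E + 6*k*T*g*t*E
      ≤ -(1/6)*(O^2+E^2) + 30000*(A^2*t^2 + T^2) := by
  have hq0 : 0 ≤ k*g := by positivity
  have hq1 : k*g ≤ 3/2 := by nlinarith
  have hq2 : (k*g)^2 ≤ 9/4 := by nlinarith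
  have ht2 : t^2 ≤ 1 := by nlinarith
  have y1 : -(6*k*A*g*t*O) ≤ O^2/100 + 900*(9/4)*(A^2*t^2) := by
    have : (k*g)^2*(A^2*t^2) ≤ 9/4*(A^2*t^2) := mul_le_mul_of_nonneg_right hq2 (by positivity)
    nlinarith [sq_nonneg (O/10 + 30*(k*g)*A*t)]
  have y2 : -(18*k*A*g*t^2*E) ≤ E^2/100 + 8100*(9/4)*(A^2*t^2) := by
    have h1 : (k*g)^2*(A^2*t^2) ≤ 9/4*(A^2*t^2) := mul_le_mul_of_nonneg_right hq2 (by positivity)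
    have h2 : (k*g)^2*(A^2*t^2)*t^2 ≤ (k*g)^2*(A^2*t^2)*1 :=
      mul_le_mul_of_nonneg_left ht2 (by positivity)
    nlinarith [sq_nonneg (E/10 + 90*(k*g)*A*t^2)]
  have y3 : 6*k*T*g*t*E ≤ E^2/100 + 900*(9/4)*T^2 := by
    have h1 : (k*g)^2*T^2 ≤ 9/4*T^2 := mul_le_mul_of_nonneg_right hq2 (by positivity)
    have h2 : (k*g)^2*T^2*t^2 ≤ (k*g)^2*T^2*1 :=
      mul_le_mul_of_nonneg_left ht2 (by positivity)
    nlinarith [sq_nonneg (E/10 - 30*(k*g)*T*t)]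
  have q0 : 0 ≤ (1/2-1/6-1/100)*O^2 + (3/2-1/6-2/100)*E^2 - O*E := by
    nlinarith [sq_nonneg (O/2 - E), sq_nonneg O, sq_nonneg E]
  have q1 : 0 ≤ (1/2+197/100-1/6-1/100)*O^2 + (3/2-103/100-1/6-2/100)*E^2 - O*E := by
    nlinarith [sq_nonneg (O - E/2), sq_nonneg O, sq_nonneg E]
  have q2 := mul_nonneg (sub_nonneg.2 ht1) q0
  have q3 := mul_nonneg ht0.le q1
  have mm : 0 ≤ (O^2+E^2)*(t*(1-m)) := by
    have := sub_nonneg.2 hm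
    positivity
  have hA : 0 ≤ A^2*t^2 := by positivity
  have hT : 0 ≤ T^2 := by positivity
  nlinarith

lemma partials {f : ℝ → ℝ → ℝ} (hf : ContDiff ℝ 1 (Function.uncurry f)) :
    (Continuous fun p : ℝ × ℝ => deriv (fun r => f r p.2) p.1) ∧
    (Continuous fun p : ℝ × ℝ => deriv (fun b => f p.1 b) p.2) ∧
    (∀ R β, HasDerivAt (fun r => f r β) (deriv (fun r => f r β) R) R) ∧
    (∀ R β, HasDerivAt (fun b => f R b) (deriv (fun b => f R b) β) β) := by
  have hd : Differentiable ℝ (Function.uncurry f) := hf.differentiable (by norm_num)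
  have hc := hf.continuous_fderiv (by norm_num)
  have h1 : ∀ R β, HasDerivAt (fun r => f r β)
      (fderiv ℝ (Function.uncurry f) (R, β) (1, 0)) R := by
    intro R β
    have := (hd (R, β)).hasFDerivAt.comp_hasDerivAt R
      ((hasDerivAt_id R).prodMk (hasDerivAt_const R β))
    exact this
  have h2 : ∀ R β, HasDerivAt (fun b => f R b)
      (fderiv ℝ (Function.uncurry f) (R, β) (0, 1)) β := by
    intro R β
    have := (hd (R, β)).hasFDerivAt.comp_hasDerivAt β
      ((hasDerivAt_const β R).prodMk (hasDerivAt_id β))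
    exact this
  refine ⟨?_, ?_, fun R β => (h1 R β).differentiableAt.hasDerivAt,
    fun R β => (h2 R β).differentiableAt.hasDerivAt⟩
  · have : (fun p : ℝ × ℝ => deriv (fun r => f r p.2) p.1)
        = fun p => fderiv ℝ (Function.uncurry f) p (1, 0) := by
      funext p; exact (h1 p.1 p.2).deriv
    rw [this]; fun_prop
  · have : (fun p : ℝ × ℝ => deriv (fun b => f p.1 b) p.2)
        = fun p => fderiv ℝ (Function.uncurry f) p (0, 1) := by
      funext p; exact (h2 p.1 p.2).deriv
    rw [this]; fun_prop

lemma opL1_eq {α : ℝ} (h0 : 0 < α) (hc : 0 < cst α) (Ω η : ℝ → ℝ → ℝ) {R : ℝ} (hR : 0 < R)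
    (β : ℝ) :
    opL1 α Ω η R β = -(R * deriv (fun r => Ω r β) R)
      - 3/(1+R) * (Real.sin (2*β) * deriv (fun b => Ω R b) β) - Ω R β + η R β
      - (2/(Real.pi * cst α)) * L12 Ω 0 * Γf α β * (6*R^2/(1+R)^3) := by
  have h1 : (1 + R) ≠ 0 := by positivity
  have hd : HasDerivAt (fun r => Ωbar α r β)
      ((α / cst α) * Γf α β * ((3*1*(1+R)^2 - 3*R*(2*(1+R)))/((1+R)^2)^2)) R := by
    have ha : HasDerivAt (fun r : ℝ => 3*r) (3*1) R := (hasDerivAt_id R).const_mul 3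
    have hb : HasDerivAt (fun r : ℝ => (1+r)^2) (2*(1+R)) R :=
      (((hasDerivAt_id R).const_add 1).pow 2).congr_deriv (by simp)
    exact (ha.div hb (by positivity)).const_mul _
  have hp := Real.pi_pos
  unfold opL1 DR Dbeta cω
  rw [hd.deriv]
  unfold Ωbar
  field_simp
  ring

lemma opL2_eq {α : ℝ} (h0 : 0 < α) (hc : 0 < cst α) (Ω η : ℝ → ℝ → ℝ) {R : ℝ} (hR : 0 < R)
    (β : ℝ) :
    opL2 α Ω η R β = -(R * deriv (fun r => η r β) R)
      - 3/(1+R) * (Real.sin (2*β) * deriv (fun b => η R b) β) + (-2 + 3/(1+R)) * η R β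
      + (2/(Real.pi * cst α)) * tL12 Ω R * Γf α β * (6*R/(1+R)^3)
      - (2/(Real.pi * cst α)) * L12 Ω 0 * Γf α β * (18*R^2/(1+R)^4) := by
  have h1 : (1 + R) ≠ 0 := by positivity
  have hd : HasDerivAt (fun r => ηbar α r β)
      ((α / cst α) * Γf α β * ((6*1*(1+R)^3 - 6*R*(3*(1+R)^2))/((1+R)^3)^2)) R := by
    have ha : HasDerivAt (fun r : ℝ => 6*r) (6*1) R := (hasDerivAt_id R).const_mul 6
    have hb : HasDerivAt (fun r : ℝ => (1+r)^3) (3*(1+R)^2) R :=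
      (((hasDerivAt_id R).const_add 1).pow 3).congr_deriv (by simp)
    exact (ha.div hb (by positivity)).const_mul _
  have hp := Real.pi_pos
  unfold opL2 DR Dbeta cω
  rw [hd.deriv]
  unfold ηbar
  field_simp
  ring

lemma contG1 {O E OR OB S s g : ℝ × ℝ → ℝ} {k A : ℝ}
    (hO : ContinuousOn O Qdom) (hE : ContinuousOn E Qdom) (hOR : ContinuousOn OR Qdom)
    (hOB : ContinuousOn OB Qdom) (hS : ContinuousOn S Qdom) (hs : ContinuousOn s Qdom)
    (hg : ContinuousOn g Qdom) :
    ContinuousOn (fun p : ℝ × ℝ => (-(p.1 * OR p) - 3/(1+p.1) * (S p * OB p) - O p + E p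
      - k * A * g p * (6*p.1^2/(1+p.1)^3)) * (O p * ((1+p.1)^4/p.1^4 * s p))) Qdom := by
  have n0 : ∀ p ∈ Qdom, p.1 ≠ 0 := fun p hp => ne_of_gt hp.1
  have n1 : ∀ p ∈ Qdom, 1 + p.1 ≠ 0 := fun p hp => by have : 0 < p.1 := hp.1; positivity
  have n4 : ∀ p ∈ Qdom, p.1^4 ≠ 0 := fun p hp => pow_ne_zero _ (n0 p hp)
  have n3 : ∀ p ∈ Qdom, (1+p.1)^3 ≠ 0 := fun p hp => pow_ne_zero _ (n1 p hp)
  fun_prop (disch := assumption)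

lemma contG2 {E OR OB S s g T : ℝ × ℝ → ℝ} {k A : ℝ}
    (hE : ContinuousOn E Qdom) (hOR : ContinuousOn OR Qdom)
    (hOB : ContinuousOn OB Qdom) (hS : ContinuousOn S Qdom) (hs : ContinuousOn s Qdom)
    (hg : ContinuousOn g Qdom) (hT : ContinuousOn T Qdom) :
    ContinuousOn (fun p : ℝ × ℝ => (-(p.1 * OR p) - 3/(1+p.1) * (S p * OB p)
      + (-2 + 3/(1+p.1)) * E p + k * T p * g p * (6*p.1/(1+p.1)^3)
      - k * A * g p * (18*p.1^2/(1+p.1)^4)) * (E p * ((1+p.1)^4/p.1^4 * s p))) Qdom := by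
  have n0 : ∀ p ∈ Qdom, p.1 ≠ 0 := fun p hp => ne_of_gt hp.1
  have n1 : ∀ p ∈ Qdom, 1 + p.1 ≠ 0 := fun p hp => by have : 0 < p.1 := hp.1; positivity
  have n4 : ∀ p ∈ Qdom, p.1^4 ≠ 0 := fun p hp => pow_ne_zero _ (n0 p hp)
  have n3 : ∀ p ∈ Qdom, (1+p.1)^3 ≠ 0 := fun p hp => pow_ne_zero _ (n1 p hp)
  have n5 : ∀ p ∈ Qdom, (1+p.1)^4 ≠ 0 := fun p hp => pow_ne_zero _ (n1 p hp)
  fun_prop (disch := assumption)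

lemma contJ {O E OR ER s : ℝ × ℝ → ℝ}
    (hO : ContinuousOn O Qdom) (hE : ContinuousOn E Qdom) (hOR : ContinuousOn OR Qdom)
    (hER : ContinuousOn ER Qdom) (hs : ContinuousOn s Qdom) :
    ContinuousOn (fun p : ℝ × ℝ => ((O p^2 + E p^2) * (1 - 4/(1+p.1))
      + p.1 * (2 * (O p * OR p + E p * ER p))) * ((1+p.1)^4/p.1^4 * s p)) Qdom := by
  have n0 : ∀ p ∈ Qdom, p.1 ≠ 0 := fun p hp => ne_of_gt hp.1
  have n1 : ∀ p ∈ Qdom, 1 + p.1 ≠ 0 := fun p hp => by have : 0 < p.1 := hp.1; positivity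
  have n4 : ∀ p ∈ Qdom, p.1^4 ≠ 0 := fun p hp => pow_ne_zero _ (n0 p hp)
  fun_prop (disch := assumption)

lemma contM {O E OB EB s S m : ℝ × ℝ → ℝ}
    (hO : ContinuousOn O Qdom) (hE : ContinuousOn E Qdom) (hOR : ContinuousOn OB Qdom)
    (hER : ContinuousOn EB Qdom) (hs : ContinuousOn s Qdom) (hS : ContinuousOn S Qdom)
    (hm : ContinuousOn m Qdom) :
    ContinuousOn (fun p : ℝ × ℝ => 3/(1+p.1) * ((O p^2 + E p^2) * (2/100 * m p)
      + 2 * (O p * OB p + E p * EB p) * S p) * ((1+p.1)^4/p.1^4 * s p)) Qdom := by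
  have n0 : ∀ p ∈ Qdom, p.1 ≠ 0 := fun p hp => ne_of_gt hp.1
  have n1 : ∀ p ∈ Qdom, 1 + p.1 ≠ 0 := fun p hp => by have : 0 < p.1 := hp.1; positivity
  have n4 : ∀ p ∈ Qdom, p.1^4 ≠ 0 := fun p hp => pow_ne_zero _ (n0 p hp)
  fun_prop (disch := assumption)

lemma derJ {O E : ℝ → ℝ} {OR ER R s : ℝ} (hR : 0 < R) (hO : HasDerivAt O OR R)
    (hE : HasDerivAt E ER R) :
    HasDerivAt (fun r => r * (O r^2 + E r^2) * ((1+r)^4/r^4 * s))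
      (((O R^2 + E R^2) * (1 - 4/(1+R))
      + R * (2 * (O R * OR + E R * ER))) * ((1+R)^4/R^4 * s)) R := by
  have h1 : (1 + R) ≠ 0 := by positivity
  have ha : HasDerivAt (fun r : ℝ => (1+r)^4) (4*(1+R)^3) R :=
      (((hasDerivAt_id R).const_add 1).pow 4).congr_deriv (by simp)
  have hb : HasDerivAt (fun r : ℝ => r^4) (4*R^3) R :=
      ((hasDerivAt_id R).pow 4).congr_deriv (by simp)
  have hw := (ha.div hb (by positivity)).mul_const s
  have hq := (hasDerivAt_id R).mul ((hO.pow 2).add (hE.pow 2))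
  refine HasDerivAt.congr_deriv (hq.mul hw) ?_
  simp
  field_simp
  ring

lemma derM {O E : ℝ → ℝ} {OB EB R β : ℝ} (hR : 0 < R) (hβ : β ∈ Ioo (0:ℝ) (Real.pi/2))
    (hO : HasDerivAt O OB β) (hE : HasDerivAt E EB β) :
    HasDerivAt (fun b => 3/(1+R) * ((1+R)^4/R^4) * ((O b^2 + E b^2) * Real.sin (2*b) ^ (1/100:ℝ)))
      (3/(1+R) * ((O β^2 + E β^2) * (2/100 * Real.cos (2*β))
      + 2 * (O β * OB + E β * EB) * Real.sin (2*β))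
        * ((1+R)^4/R^4 * Real.sin (2*β) ^ (-(99/100 : ℝ)))) β := by
  have hs := sin2_pos hβ
  have h2 : HasDerivAt (fun b : ℝ => Real.sin (2*b)) (Real.cos (2*β) * 2) β :=
    ((hasDerivAt_id β).const_mul 2).sin.congr_deriv (by simp)
  have h3 := h2.rpow_const (p := (1/100:ℝ)) (Or.inl hs.ne')
  have e1 : (1/100:ℝ) - 1 = -(99/100) := by norm_num
  have e2 : Real.sin (2*β) ^ (1/100:ℝ) = Real.sin (2*β) * Real.sin (2*β) ^ (-(99/100 : ℝ)) := by
    conv_rhs => rw [← Real.rpow_one_add' hs.le (by norm_num)]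
    norm_num
  rw [e1] at h3
  refine HasDerivAt.congr_deriv ((((hO.pow 2).add (hE.pow 2)).mul h3).const_mul _) ?_
  simp only [Pi.add_apply, Pi.pow_apply]
  rw [e2]
  push_cast
  ring

/-- The pointwise inequality in the original variables. -/
lemma pw2 {R s m S O E OR OB ER EB k A g T : ℝ} (hR : 0 < R) (hs : 0 ≤ s) (hm : m ≤ 1)
    (hk0 : 0 ≤ k) (hk1 : k ≤ 3/2) (hg0 : 0 ≤ g) (hg1 : g ≤ 1) :
    (-(R * OR) - 3/(1+R) * (S * OB) - O + E
      - k * A * g * (6*R^2/(1+R)^3)) * (O * ((1+R)^4/R^4 * s))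
    + (-(R * ER) - 3/(1+R) * (S * EB)
      + (-2 + 3/(1+R)) * E + k * T * g * (6*R/(1+R)^3)
      - k * A * g * (18*R^2/(1+R)^4)) * (E * ((1+R)^4/R^4 * s))
    + (1/2) * (((O^2 + E^2) * (1 - 4/(1+R))
      + R * (2 * (O * OR + E * ER))) * ((1+R)^4/R^4 * s))
    + (1/2) * (3/(1+R) * ((O^2 + E^2) * (2/100 * m)
      + 2 * (O * OB + E * EB) * S) * ((1+R)^4/R^4 * s))
    ≤ -(1/6) * (O^2 * ((1+R)^4/R^4 * s) + E^2 * ((1+R)^4/R^4 * s))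
      + 30000 * ((A^2 * (1+R^2)⁻¹ + (T/R)^2) * s) := by
  have h1 : (1 + R) ≠ 0 := by positivity
  have key := pw (t := 1/(1+R)) (m := m) (O := O * ((1+R)^2/R^2)) (E := E * ((1+R)^2/R^2))
    (k := k) (A := A) (g := g) (T := T/R) (by positivity)
    (by rw [div_le_one (by positivity)]; linarith) hm hk0 hk1 hg0 hg1
  have ht : A^2 * (1/(1+R))^2 ≤ A^2 * (1+R^2)⁻¹ := by
    refine mul_le_mul_of_nonneg_left ?_ (by positivity)
    rw [div_pow, one_pow, ← one_div]
    exact one_div_le_one_div_of_le (by positivity) (by nlinarith)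
  have key2 := key.trans (add_le_add_right (mul_le_mul_of_nonneg_left
    (add_le_add_left ht ((T/R)^2)) (by norm_num : (0:ℝ) ≤ 30000)) _)
  have key3 := mul_le_mul_of_nonneg_right key2 hs
  refine le_trans (le_of_eq ?_) (key3.trans (le_of_eq ?_))
  · field_simp
    ring
  · generalize (1+R^2)⁻¹ = q
    field_simp

/-- weighted `L²` estimate of `Ω, η` with the more singular weight `φ₁`. -/
theorem weighted_L2_estimate_more_singular :
    ∃ K₃ : ℝ, 0 < K₃ ∧ ∀ α : ℝ, 0 < α → α ≤ 1/1000 →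
      ∀ Ω η : ℝ → ℝ → ℝ,
        ContDiff ℝ 1 (Function.uncurry Ω) → ContDiff ℝ 1 (Function.uncurry η) →
        suppIn Ω → suppIn η →
        inner2 (opL1 α Ω η) (fun R β => Ω R β * phi1 R β)
            + inner2 (opL2 α Ω η) (fun R β => η R β * phi1 R β)
          ≤ -(1/6) *
              ((norm2 (fun R β => Ω R β * Real.sqrt (phi1 R β)))^2
                + (norm2 (fun R β => η R β * Real.sqrt (phi1 R β)))^2)
            + K₃ * ((L12 Ω 0)^2 + (normR (fun R => tL12 Ω R / R))^2) := by
  set S0 : ℝ := ∫ β in Ioo (0:ℝ) (Real.pi/2), Real.sin (2*β) ^ (-(99/100 : ℝ)) with hS0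
  set N0 : ℝ := ∫ R in Ioi (0:ℝ), (1+R^2)⁻¹ with hN0
  have hS0n : 0 ≤ S0 := by
    refine setIntegral_nonneg measurableSet_Ioo ?_
    intro β hβ
    have := sin2_pos hβ
    positivity
  have hN0n : 0 ≤ N0 := setIntegral_nonneg measurableSet_Ioi (fun R _ => by positivity)
  refine ⟨30000 * (N0 + 1) * (S0 + 1), by positivity, ?_⟩
  intro α h0 hα Ω η hΩ hη hsΩ hsη
  obtain ⟨a, b, c, d, ha, hc, hd, hbΩ, hbη⟩ := exists_box2 hsΩ hsη
  have hp := Real.pi_pos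
  have hcge := cst_ge h0 (by linarith)
  have hcpos : 0 < cst α := lt_of_lt_of_le (by positivity) hcge
  set k : ℝ := 2/(Real.pi * cst α) with hk
  have hk0 : 0 ≤ k := by positivity
  have hk1 : k ≤ 3/2 := by
    rw [hk, div_le_iff₀ (by positivity)]
    have : Real.pi * (2/Real.pi * (2/3)) ≤ Real.pi * cst α := mul_le_mul_of_nonneg_left hcge hp.le
    have e : Real.pi * (2/Real.pi * (2/3)) = 4/3 := by field_simp; norm_num
    linarith
  set A : ℝ := L12 Ω 0 with hA
  obtain ⟨hTc, hTi⟩ := tL12_facts_s3 ha hc hd hΩ.continuous hbΩ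
  obtain ⟨cOR, cOB, dOR, dOB⟩ := partials hΩ
  obtain ⟨cER, cEB, dER, dEB⟩ := partials hη
  -- continuity facts
  have cO : ContinuousOn (fun p : ℝ × ℝ => Ω p.1 p.2) Qdom := hΩ.continuous.continuousOn
  have cE : ContinuousOn (fun p : ℝ × ℝ => η p.1 p.2) Qdom := hη.continuous.continuousOn
  have cS : ContinuousOn (fun p : ℝ × ℝ => Real.sin (2*p.2)) Qdom := by fun_prop
  have cm : ContinuousOn (fun p : ℝ × ℝ => Real.cos (2*p.2)) Qdom := by fun_prop
  have cs : ContinuousOn (fun p : ℝ × ℝ => Real.sin (2*p.2) ^ (-(99/100 : ℝ))) Qdom :=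
    cS.rpow_const (fun p hp => Or.inl (sin2_pos hp.2).ne')
  have cg : ContinuousOn (fun p : ℝ × ℝ => Γf α p.2) Qdom :=
    ((Real.continuous_cos.comp continuous_snd).rpow_const (fun _ => Or.inr h0.le)).continuousOn
  have cT : ContinuousOn (fun p : ℝ × ℝ => tL12 Ω p.1) Qdom :=
    hTc.comp continuous_fst.continuousOn (fun p hp => hp.1)
  -- integrability of the four terms
  have i1 : IntegrableOn (Function.uncurry fun R β => opL1 α Ω η R β * (Ω R β * phi1 R β)) Qdom := by
    refine int_box ha hc hd (a := a) (b := b) (c := c) (d := d) ?_ ?_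
    · intro x y h; simp [hbΩ x y h]
    · refine (contG1 (k := k) (A := A) cO cE cOR.continuousOn cOB.continuousOn cS cs cg).congr ?_
      rintro ⟨R, β⟩ hq
      simp only [Function.uncurry_apply_pair]
      rw [opL1_eq h0 hcpos Ω η hq.1 β]
      rfl
  have i2 : IntegrableOn (Function.uncurry fun R β => opL2 α Ω η R β * (η R β * phi1 R β)) Qdom := by
    refine int_box ha hc hd (a := a) (b := b) (c := c) (d := d) ?_ ?_
    · intro x y h; simp [hbη x y h]
    · refine (contG2 (k := k) (A := A) cE cER.continuousOn cEB.continuousOn cS cs cg cT).congr ?_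
      rintro ⟨R, β⟩ hq
      simp only [Function.uncurry_apply_pair]
      rw [opL2_eq h0 hcpos Ω η hq.1 β]
      rfl
  set J : ℝ → ℝ → ℝ := fun R β => ((Ω R β^2 + η R β^2) * (1 - 4/(1+R))
      + R * (2 * (Ω R β * deriv (fun r => Ω r β) R + η R β * deriv (fun r => η r β) R)))
        * ((1+R)^4/R^4 * Real.sin (2*β) ^ (-(99/100 : ℝ))) with hJ
  set M : ℝ → ℝ → ℝ := fun R β => 3/(1+R) * ((Ω R β^2 + η R β^2) * (2/100 * Real.cos (2*β))
      + 2 * (Ω R β * deriv (fun b => Ω R b) β + η R β * deriv (fun b => η R b) β)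
        * Real.sin (2*β)) * ((1+R)^4/R^4 * Real.sin (2*β) ^ (-(99/100 : ℝ))) with hM
  have bJ : boxIn a b c d J := by intro x y h; simp [hJ, hbΩ x y h, hbη x y h]
  have bM : boxIn a b c d M := by intro x y h; simp [hM, hbΩ x y h, hbη x y h]
  have cJ : ContinuousOn (Function.uncurry J) Qdom :=
    contJ cO cE cOR.continuousOn cER.continuousOn cs
  have cM : ContinuousOn (Function.uncurry M) Qdom :=
    contM cO cE cOB.continuousOn cEB.continuousOn cs cS cm
  have i3 := int_box ha hc hd bJ cJ
  have i4 := int_box ha hc hd bM cM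
  have z3 : ∫ p in Qdom, J p.1 p.2 = 0 := by
    refine zero_R ha hc hd (f := fun R β => R * (Ω R β^2 + η R β^2) *
      ((1+R)^4/R^4 * Real.sin (2*β) ^ (-(99/100 : ℝ)))) ?_ bJ ?_ cJ
    · intro x y h; simp [hbΩ x y h, hbη x y h]
    · intro R hR β _
      exact derJ hR (dOR R β) (dER R β)
  have z4 : ∫ p in Qdom, M p.1 p.2 = 0 := by
    refine zero_B ha hc hd (f := fun R b => 3/(1+R) * ((1+R)^4/R^4) *
      ((Ω R b^2 + η R b^2) * Real.sin (2*b) ^ (1/100:ℝ))) ?_ bM ?_ cM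
    · intro x y h; simp [hbΩ x y h, hbη x y h]
    · intro R hR β hβ
      exact derM hR hβ (dOB R β) (dEB R β)
  -- norms
  have cphi : ContinuousOn (fun p : ℝ × ℝ => phi1 p.1 p.2) Qdom := by
    have : ContinuousOn (fun p : ℝ × ℝ => (1+p.1)^4/p.1^4) Qdom :=
      ContinuousOn.div (by fun_prop) (by fun_prop) (fun p hp => pow_ne_zero _ (ne_of_gt hp.1))
    exact this.mul cs
  have phin : ∀ p ∈ Qdom, 0 ≤ phi1 p.1 p.2 := by
    intro p hp
    have h1 := sin2_pos hp.2
    have h2 : 0 < p.1 := hp.1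
    unfold phi1
    positivity
  have hnorm : ∀ f : ℝ → ℝ → ℝ, boxIn a b c d f →
      ContinuousOn (fun p : ℝ × ℝ => f p.1 p.2) Qdom →
      IntegrableOn (fun p : ℝ × ℝ => f p.1 p.2 ^ 2 * phi1 p.1 p.2) Qdom ∧
      (norm2 (fun R β => f R β * Real.sqrt (phi1 R β)))^2
        = ∫ p in Qdom, f p.1 p.2 ^ 2 * phi1 p.1 p.2 := by
    intro f hf hfc
    have e : ∀ p ∈ Qdom, (f p.1 p.2 * Real.sqrt (phi1 p.1 p.2)) *
        (f p.1 p.2 * Real.sqrt (phi1 p.1 p.2)) = f p.1 p.2 ^ 2 * phi1 p.1 p.2 := by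
      intro p hp
      rw [mul_mul_mul_comm, Real.mul_self_sqrt (phin p hp)]; ring
    have hi : IntegrableOn (Function.uncurry fun R β => (f R β * Real.sqrt (phi1 R β)) *
        (f R β * Real.sqrt (phi1 R β))) Qdom := by
      refine int_box ha hc hd (a := a) (b := b) (c := c) (d := d) ?_ ?_
      · intro x y h; simp [hf x y h]
      · have h5 := hfc.mul cphi.sqrt
        exact h5.mul h5
    refine ⟨IntegrableOn.congr_fun hi (fun p hp => e p hp) Qdom_meas, ?_⟩
    unfold norm2
    rw [Real.sq_sqrt]
    · unfold inner2
      rw [iter_eq hi]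
      exact setIntegral_congr_fun Qdom_meas (fun p hp => e p hp)
    · unfold inner2
      exact integral_nonneg fun R => integral_nonneg fun β => mul_self_nonneg _
  obtain ⟨iO, eO⟩ := hnorm Ω hbΩ cO
  obtain ⟨iE, eE⟩ := hnorm η hbη cE
  have eR : (normR (fun R => tL12 Ω R / R))^2 = ∫ R in Ioi (0:ℝ), (tL12 Ω R / R)^2 := by
    unfold normR
    rw [Real.sq_sqrt (integral_nonneg fun R => sq_nonneg _)]
  set T0 : ℝ := ∫ R in Ioi (0:ℝ), (tL12 Ω R / R)^2 with hT0
  have hT0n : 0 ≤ T0 := integral_nonneg fun R => sq_nonneg _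
  -- the error term
  have iN : IntegrableOn (fun R : ℝ => (1+R^2)⁻¹) (Ioi 0) := integrable_inv_one_add_sq.integrableOn
  have iAT : IntegrableOn (fun R : ℝ => A^2 * (1+R^2)⁻¹ + (tL12 Ω R / R)^2) (Ioi 0) :=
    (iN.const_mul _).add hTi
  have iErr : IntegrableOn (fun p : ℝ × ℝ => (A^2 * (1+p.1^2)⁻¹ + (tL12 Ω p.1 / p.1)^2) *
      Real.sin (2*p.2) ^ (-(99/100 : ℝ))) Qdom := by
    have := Integrable.mul_prod iAT s_int
    rw [Measure.prod_restrict] at this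
    exact this
  have eErr : ∫ p in Qdom, (A^2 * (1+p.1^2)⁻¹ + (tL12 Ω p.1 / p.1)^2) *
      Real.sin (2*p.2) ^ (-(99/100 : ℝ)) = (A^2 * N0 + T0) * S0 := by
    have h7 := setIntegral_prod_mul (μ := (volume : Measure ℝ)) (ν := (volume : Measure ℝ))
      (fun R : ℝ => A^2 * (1+R^2)⁻¹ + (tL12 Ω R / R)^2)
      (fun β : ℝ => Real.sin (2*β) ^ (-(99/100 : ℝ))) (Ioi 0) (Ioo 0 (Real.pi/2))
    have h8 : ∫ R in Ioi (0:ℝ), (A^2 * (1+R^2)⁻¹ + (tL12 Ω R / R)^2) = A^2 * N0 + T0 := by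
      rw [integral_add (iN.const_mul _) hTi, integral_const_mul]
    rw [h8] at h7
    exact h7
  have iLHS : IntegrableOn (fun p : ℝ × ℝ => opL1 α Ω η p.1 p.2 * (Ω p.1 p.2 * phi1 p.1 p.2)
      + opL2 α Ω η p.1 p.2 * (η p.1 p.2 * phi1 p.1 p.2)
      + (1/2) * J p.1 p.2 + (1/2) * M p.1 p.2) Qdom :=
    ((i1.add i2).add (i3.const_mul (1/2))).add (i4.const_mul (1/2))
  have iRHS : IntegrableOn (fun p : ℝ × ℝ => -(1/6) * (Ω p.1 p.2 ^ 2 * phi1 p.1 p.2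
      + η p.1 p.2 ^ 2 * phi1 p.1 p.2)
      + 30000 * ((A^2 * (1+p.1^2)⁻¹ + (tL12 Ω p.1 / p.1)^2) *
      Real.sin (2*p.2) ^ (-(99/100 : ℝ)))) Qdom :=
    ((iO.add iE).const_mul _).add (iErr.const_mul _)
  have hmono := setIntegral_mono_on iLHS iRHS Qdom_meas (by
    rintro ⟨R, β⟩ ⟨hR, hβ⟩
    have hcx : 0 < Real.cos β := Real.cos_pos_of_mem_Ioo ⟨by linarith [hβ.1], hβ.2⟩
    have hsx : 0 < Real.sin (2*β) := sin2_pos hβ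
    simp only
    rw [opL1_eq h0 hcpos Ω η hR β, opL2_eq h0 hcpos Ω η hR β]
    exact pw2 hR (by positivity) (Real.cos_le_one _) hk0 hk1
      (by unfold Γf; positivity)
      (Real.rpow_le_one hcx.le (Real.cos_le_one _) h0.le))
  have eL : ∫ p in Qdom, (opL1 α Ω η p.1 p.2 * (Ω p.1 p.2 * phi1 p.1 p.2)
      + opL2 α Ω η p.1 p.2 * (η p.1 p.2 * phi1 p.1 p.2)
      + (1/2) * J p.1 p.2 + (1/2) * M p.1 p.2)
      = (∫ p in Qdom, opL1 α Ω η p.1 p.2 * (Ω p.1 p.2 * phi1 p.1 p.2))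
        + ∫ p in Qdom, opL2 α Ω η p.1 p.2 * (η p.1 p.2 * phi1 p.1 p.2) := by
    have s1 := integral_add ((i1.add i2).add (i3.const_mul (1/2))) (i4.const_mul (1/2))
    have s2 := integral_add (i1.add i2) (i3.const_mul (1/2))
    have s3 := integral_add i1 i2
    have s4 : ∫ p in Qdom, (1/2) * Function.uncurry J p = 0 := by
      rw [integral_const_mul]; exact mul_eq_zero_of_right _ z3
    have s5 : ∫ p in Qdom, (1/2) * Function.uncurry M p = 0 := by
      rw [integral_const_mul]; exact mul_eq_zero_of_right _ z4
    simp only [Pi.add_apply] at s1 s2 s3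
    rw [s4, add_zero] at s2
    rw [s5, add_zero, s2, s3] at s1
    exact s1
  have eRr : ∫ p in Qdom, (-(1/6) * (Ω p.1 p.2 ^ 2 * phi1 p.1 p.2
      + η p.1 p.2 ^ 2 * phi1 p.1 p.2)
      + 30000 * ((A^2 * (1+p.1^2)⁻¹ + (tL12 Ω p.1 / p.1)^2) *
      Real.sin (2*p.2) ^ (-(99/100 : ℝ))))
      = -(1/6) * ((∫ p in Qdom, Ω p.1 p.2 ^ 2 * phi1 p.1 p.2)
        + ∫ p in Qdom, η p.1 p.2 ^ 2 * phi1 p.1 p.2) + 30000 * ((A^2 * N0 + T0) * S0) := by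
    rw [← eErr, ← integral_const_mul, ← integral_add iO iE, ← integral_const_mul]
    exact integral_add ((iO.add iE).const_mul (-(1/6))) (iErr.const_mul 30000)
  rw [eL, eRr] at hmono
  have e1 : inner2 (opL1 α Ω η) (fun R β => Ω R β * phi1 R β)
      = ∫ p in Qdom, opL1 α Ω η p.1 p.2 * (Ω p.1 p.2 * phi1 p.1 p.2) := iter_eq i1
  have e2 : inner2 (opL2 α Ω η) (fun R β => η R β * phi1 R β)
      = ∫ p in Qdom, opL2 α Ω η p.1 p.2 * (η p.1 p.2 * phi1 p.1 p.2) := iter_eq i2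
  rw [e1, e2, eO, eE, eR]
  refine hmono.trans ?_
  have hA2 : 0 ≤ A^2 := sq_nonneg A
  have fin : 30000 * ((A^2 * N0 + T0) * S0) ≤ 30000 * (N0 + 1) * (S0 + 1) * (A^2 + T0) := by
    have u1 : A^2 * N0 + T0 ≤ (N0 + 1) * (A^2 + T0) := by nlinarith [mul_nonneg hN0n hT0n]
    have u2 : (A^2 * N0 + T0) * S0 ≤ ((N0 + 1) * (A^2 + T0)) * (S0 + 1) :=
      mul_le_mul u1 (by linarith) hS0n (by positivity)
    nlinarith
  linarith

end Paper
end
end
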